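/- arXiv:2201.00984 — 2 statements merged into one kernel-verified Lean document; each statement's English description precedes it below -/
import Mathlib

section
/- Let (R, m, k) be a commutative Noetherian local ring, let x ∈ m ∖ m² be an R-regular element, and let M be a finitely generated R-module with xM = 0. Set R' = R/(x) and β_n^R(M) = dim_k Tor_n^R(M, k), β_n^{R'}(M) = dim_k Tor_n^{R'}(M, k). Then for all n ≥ 2 one has β_{n−1}^{R'}(M) ≤ β_n^R(M) ≤ β_n^{R'}(M) + β_{n−1}^{R'}(M). Consequently M has the same complexity and the same curvature over R and over R'. -/
open CategoryTheory IsLocalRing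

section Prelim

variable (R : Type) [CommRing R]

/-- `Tor_i^R(M, N) = 0`. -/
noncomputable def TorVanish (M N : Type) [AddCommGroup M] [Module R M]
    [AddCommGroup N] [Module R N] (i : ℕ) : Prop :=
  Subsingleton (((Tor (ModuleCat R) i).obj (ModuleCat.of R M)).obj (ModuleCat.of R N))

/-- `Ext_R^i(M, N) = 0`. -/
noncomputable def ExtVanish (M N : Type) [AddCommGroup M] [Module R M]
    [AddCommGroup N] [Module R N] (i : ℕ) : Prop :=
  Subsingleton (((Ext R (ModuleCat R) i).obj (Opposite.op (ModuleCat.of R M))).obj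
    (ModuleCat.of R N))

/-- `pd_R M < n`, expressed by the standard characterization
`Ext_R^i(M, -) = 0` for all `i ≥ n`. -/
def ProjDimLT (M : Type) [AddCommGroup M] [Module R M] (n : ℕ) : Prop :=
  ∀ (N : ModuleCat R) (i : ℕ), n ≤ i → ExtVanish R M N i

/-- `pd_R M < ∞`. -/
def ProjDimFinite (M : Type) [AddCommGroup M] [Module R M] : Prop :=
  ∃ n, ProjDimLT R M n

/-- `id_R M < n`, expressed by the standard characterization
`Ext_R^i(-, M) = 0` for all `i ≥ n`. -/
def InjDimLT (M : Type) [AddCommGroup M] [Module R M] (n : ℕ) : Prop :=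
  ∀ (N : ModuleCat R) (i : ℕ), n ≤ i → ExtVanish R N M i

/-- `id_R M < ∞`. -/
def InjDimFinite (M : Type) [AddCommGroup M] [Module R M] : Prop :=
  ∃ n, InjDimLT R M n

/-- `M` is a Tor-rigid `R`-module. -/
def TorRigid (M : Type) [AddCommGroup M] [Module R M] : Prop :=
  ∀ (N : ModuleCat R), Module.Finite R N → ∀ n : ℕ, 1 ≤ n → TorVanish R M N n →
    ∀ i : ℕ, n ≤ i → TorVanish R M N i

variable [IsLocalRing R]

/-- The depth of `M`: the supremum of lengths of `M`-regular sequences contained in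
the maximal ideal. -/
noncomputable def depth (M : Type) [AddCommGroup M] [Module R M] : ℕ∞ :=
  sSup {n : ℕ∞ | ∃ rs : List R, (∀ x ∈ rs, x ∈ maximalIdeal R) ∧
    RingTheory.Sequence.IsRegular M rs ∧ (rs.length : ℕ∞) = n}

/-- The dimension of a module, i.e. the Krull dimension of `R ⧸ ann M`. -/
noncomputable def moduleDim (M : Type) [AddCommGroup M] [Module R M] : WithBot ℕ∞ :=
  ringKrullDim (R ⧸ Module.annihilator R M)

/-- `M` is an Ulrich `R`-module of dimension `s` : `M` is nonzero, Cohen–Macaulay of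
dimension `s`, and there is an `M`-regular sequence `x₁, …, x_s` in the maximal ideal
with `mM = (x₁, …, x_s)M`. -/
def IsUlrich (M : Type) [AddCommGroup M] [Module R M] (s : ℕ) : Prop :=
  Nontrivial M ∧ moduleDim R M = (s : ℕ∞) ∧ depth R M = (s : ℕ∞) ∧
  ∃ rs : List R, rs.length = s ∧ (∀ x ∈ rs, x ∈ maximalIdeal R) ∧
    RingTheory.Sequence.IsRegular M rs ∧
    (maximalIdeal R) • (⊤ : Submodule R M) = (Ideal.ofList rs) • ⊤

/-- `R` is a regular local ring: the maximal ideal is generated by `dim R` elements. -/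
def IsRegularLocal : Prop :=
  ∃ s : Finset R, Ideal.span (s : Set R) = maximalIdeal R ∧
    (s.card : WithBot ℕ∞) = ringKrullDim R

/-- `R` (of dimension `d`) has minimal multiplicity: there is an `R`-regular sequence
`x₁, …, x_d` in the maximal ideal `m` with `m² = (x₁, …, x_d)m`. -/
def HasMinimalMultiplicity (d : ℕ) : Prop :=
  ∃ rs : List R, rs.length = d ∧ (∀ x ∈ rs, x ∈ maximalIdeal R) ∧
    RingTheory.Sequence.IsWeaklyRegular R rs ∧
    maximalIdeal R ^ 2 = Ideal.ofList rs * maximalIdeal R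

/-- The `n`-th Betti number of `M` over the local ring `R`, i.e. the dimension over the
residue field `k = R ⧸ m` of `Tor_n^R(M, k)` (which is an `m`-torsion module, so we take
the dimension of its reduction mod `m`). -/
noncomputable def betti (M : Type) [AddCommGroup M] [Module R M] (n : ℕ) : ℕ :=
  Module.finrank (R ⧸ maximalIdeal R)
    ((((Tor (ModuleCat R) n).obj (ModuleCat.of R M)).obj
        (ModuleCat.of R (R ⧸ maximalIdeal R))) ⧸
      (maximalIdeal R • (⊤ : Submodule R
        (((Tor (ModuleCat R) n).obj (ModuleCat.of R M)).obj
          (ModuleCat.of R (R ⧸ maximalIdeal R))))))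

end Prelim

/-!
Dimension shifting along `0 → 𝔪 → R → k → 0` gives `Torₙ^R(M, k) ≅ Torₙ₋₁^R(M, 𝔪)` for `n ≥ 2`.
Since `x` is regular on `R` and on `𝔪`, and `M` is an `R'`-module, the latter is
`Torₙ₋₁^{R'}(M, 𝔪/x𝔪)`. Because `x ∉ 𝔪²`, there is a linear map `𝔪 → k` that sends `x` to `1`;
together with the projection onto the maximal ideal `𝔪'` of `R'` it induces an isomorphism
`𝔪/x𝔪 ≅ k × 𝔪'`. Shifting back over `R'` yields the equality
`βₙ^R(M) = βₙ₋₁^{R'}(M) + βₙ^{R'}(M)` for `n ≥ 2`, which contains both inequalities and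
forces the two Betti sequences to have the same polynomial and exponential growth.
-/

section ProjectiveResolutions

open Limits

variable {C D : Type*} [Category* C] [Category* D] [Abelian C] [Abelian D]

theorem quasiIso_toSingle₀Equiv_symm {K : ChainComplex C ℕ} {Z : C} (ε : K.X 0 ⟶ Z)
    (w : K.d 1 0 ≫ ε = 0) (hε : Epi ε) (h₀ : (ShortComplex.mk _ _ w).Exact)
    (h : ∀ n, K.ExactAt (n + 1)) :
    QuasiIso ((ChainComplex.toSingle₀Equiv K Z).symm ⟨ε, w⟩) where
  quasiIsoAt
    | 0 => by
      rw [ChainComplex.quasiIsoAt₀_iff,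
        ShortComplex.quasiIso_iff_of_zeros' _ (K.shape _ _ (by simp)) rfl rfl]
      refine (ShortComplex.exact_and_epi_g_iff_of_iso ?_).2 ⟨h₀, hε⟩
      exact ShortComplex.isoMk (Iso.refl _) (Iso.refl _) (Iso.refl _)
        (by simp [HomologicalComplex.shortComplexFunctor'])
        (by simp [HomologicalComplex.shortComplexFunctor'])
    | n + 1 =>
      (quasiIsoAt_iff_exactAt' _ _ (ChainComplex.exactAt_succ_single_obj _ _)).2 (h n)

/-- The augmentation `P₀ ⟶ Z` of a projective resolution of `Z`. It is `P.π` in degree `0`, with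
target `Z` rather than the degree `0` term of the complex `Z` concentrated in degree `0`. -/
noncomputable def augmentationMap {Z : C} (P : ProjectiveResolution Z) : P.complex.X 0 ⟶ Z :=
  P.π.f 0

theorem epi_augmentationMap {Z : C} (P : ProjectiveResolution Z) : Epi (augmentationMap P) :=
  inferInstanceAs (Epi (P.π.f 0))

theorem d_comp_augmentationMap {Z : C} (P : ProjectiveResolution Z) :
    P.complex.d 1 0 ≫ augmentationMap P = 0 :=
  P.complex_d_comp_π_f_zero

theorem exact_d_augmentationMap {Z : C} (P : ProjectiveResolution Z) :
    (ShortComplex.mk _ _ (d_comp_augmentationMap P)).Exact :=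
  P.exact₀

section Splice

variable {S : ShortComplex C} (Q : ProjectiveResolution S.X₁)

theorem d_comp_augmentationMap_comp :
    Q.complex.d 1 0 ≫ augmentationMap Q ≫ S.f = 0 := by
  rw [← Category.assoc, d_comp_augmentationMap, zero_comp]

theorem augmentationMap_comp_comp : (augmentationMap Q ≫ S.f) ≫ S.g = 0 := by
  rw [Category.assoc, S.zero, comp_zero]

theorem exact_augmentationMap_comp (hS : S.Exact) :
    (ShortComplex.mk _ _ (augmentationMap_comp_comp Q)).Exact :=
  have := epi_augmentationMap Q
  let φ : ShortComplex.mk _ _ (augmentationMap_comp_comp Q) ⟶ S :=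
    { τ₁ := augmentationMap Q, τ₂ := 𝟙 _, τ₃ := 𝟙 _ }
  (ShortComplex.exact_iff_of_epi_of_isIso_of_mono φ).2 hS

theorem exact_d_augmentationMap_comp [Mono S.f] :
    (ShortComplex.mk _ _ (d_comp_augmentationMap_comp Q)).Exact :=
  let φ : ShortComplex.mk _ _ (d_comp_augmentationMap Q) ⟶
      ShortComplex.mk _ _ (d_comp_augmentationMap_comp Q) :=
    { τ₁ := 𝟙 _, τ₂ := 𝟙 _, τ₃ := S.f }
  (ShortComplex.exact_iff_of_epi_of_isIso_of_mono φ).1 (exact_d_augmentationMap Q)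

/-- The projective resolution `⋯ ⟶ Q₁ ⟶ Q₀ ⟶ S.X₂` of `S.X₃` obtained by splicing a short exact
sequence with projective middle term and a projective resolution `Q` of `S.X₁`. -/
noncomputable def spliceProjectiveResolution (hS : S.ShortExact) [Projective S.X₂] :
    ProjectiveResolution S.X₃ where
  complex := ChainComplex.augment Q.complex _ (d_comp_augmentationMap_comp Q)
  projective
    | 0 => ‹Projective S.X₂›
    | n + 1 => Q.projective n
  π := (ChainComplex.toSingle₀Equiv _ _).symm ⟨S.g, augmentationMap_comp_comp Q⟩
  quasiIso := by
    have := hS.mono_f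
    refine quasiIso_toSingle₀Equiv_symm _ _ hS.epi_g (exact_augmentationMap_comp Q hS.exact) ?_
    rintro (_ | n)
    · rw [HomologicalComplex.exactAt_iff' _ 2 1 0 (by simp) (by simp)]
      exact exact_d_augmentationMap_comp Q
    · exact (HomologicalComplex.exactAt_iff' _ (n + 3) (n + 2) (n + 1) (by simp) (by simp)).2
        (Q.exact_succ n)

end Splice

variable [HasProjectiveResolutions C]

/-- Dimension shifting `LₙF(C) ≅ Lₙ₋₁F(A)`, `n ≥ 2`, along `0 ⟶ A ⟶ P ⟶ C ⟶ 0` with `P`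
projective. -/
noncomputable def leftDerivedDimensionShift (F : C ⥤ D) [F.Additive] {S : ShortComplex C}
    (hS : S.ShortExact) [Projective S.X₂] (n : ℕ) :
    (F.leftDerived (n + 2)).obj S.X₃ ≅ (F.leftDerived (n + 1)).obj S.X₁ :=
  let Q := projectiveResolution S.X₁
  let P := spliceProjectiveResolution Q hS
  P.isoLeftDerivedObj F (n + 2) ≪≫
    ShortComplex.homologyMapIso
      (HomologicalComplex.isoSc' _ (n + 3) (n + 2) (n + 1) (by simp) (by simp) ≪≫
        Iso.refl (((F.mapHomologicalComplex _).obj Q.complex).sc' (n + 2) (n + 1) n) ≪≫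
        (HomologicalComplex.isoSc' _ (n + 2) (n + 1) n (by simp) (by simp)).symm) ≪≫
    (Q.isoLeftDerivedObj F (n + 1)).symm

instance leftDerived_additive (F : C ⥤ D) [F.Additive] (n : ℕ) : (F.leftDerived n).Additive where
  map_add {X Y f g} := by
    let P := projectiveResolution X
    let Q := projectiveResolution Y
    have map_eq (h : X ⟶ Y) := F.leftDerived_map_eq n h (ProjectiveResolution.lift h P Q)
      (ProjectiveResolution.lift_commutes h P Q)
    rw [map_eq f, map_eq g, F.leftDerived_map_eq n (f + g)
        (ProjectiveResolution.lift f P Q + ProjectiveResolution.lift g P Q) (by simp),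
      Functor.map_add, Preadditive.add_comp, Preadditive.comp_add]

/-- The image under `G` of a projective resolution of `Z`, as a projective resolution of `G.obj Z`,
when `G` is right exact, preserves projectives and keeps the resolution exact. -/
noncomputable def mapAcyclicProjectiveResolution (G : C ⥤ D) [G.Additive]
    [PreservesFiniteColimits G] [G.PreservesProjectiveObjects] {Z : C} (P : ProjectiveResolution Z)
    (h : ∀ n, ((G.mapHomologicalComplex _).obj P.complex).ExactAt (n + 1)) :
    ProjectiveResolution (G.obj Z) where
  complex := (G.mapHomologicalComplex _).obj P.complex
  projective n := G.projective_obj_of_projective (P.projective n)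
  π := (ChainComplex.toSingle₀Equiv _ _).symm ⟨G.map (augmentationMap P),
    (G.map_comp _ _).symm.trans (by rw [d_comp_augmentationMap, G.map_zero]; rfl)⟩
  quasiIso := by
    have := epi_augmentationMap P
    exact quasiIso_toSingle₀Equiv_symm _ _ (inferInstanceAs (Epi (G.map (augmentationMap P))))
      ((exact_d_augmentationMap P).map_of_epi_of_preservesCokernel G ‹_› inferInstance) h

/-- Change of rings for derived functors: if `F ≅ G ⋙ F' ⋙ H` with `H` exact and `G` as in
`mapAcyclicProjectiveResolution`, then `LₙF(Z) ≅ H(LₙF'(G(Z)))`. -/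
noncomputable def leftDerivedCompIso {E E' : Type*} [Category* E] [Category* E'] [Abelian E]
    [Abelian E'] [HasProjectiveResolutions D] {F : C ⥤ E} [F.Additive] {G : C ⥤ D} [G.Additive]
    [PreservesFiniteColimits G] [G.PreservesProjectiveObjects] {F' : D ⥤ E'} [F'.Additive]
    {H : E' ⥤ E} [H.Additive] [H.PreservesHomology] (e : F ≅ G ⋙ F' ⋙ H) {Z : C}
    (P : ProjectiveResolution Z)
    (h : ∀ n, ((G.mapHomologicalComplex _).obj P.complex).ExactAt (n + 1)) (n : ℕ) :
    (F.leftDerived n).obj Z ≅ H.obj ((F'.leftDerived n).obj (G.obj Z)) :=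
  let Q := mapAcyclicProjectiveResolution G P h
  P.isoLeftDerivedObj F n ≪≫
    (HomologicalComplex.homologyFunctor _ _ n).mapIso
      ((NatIso.mapHomologicalComplex e _).app P.complex) ≪≫
    (((F'.mapHomologicalComplex _).obj Q.complex).sc n).mapHomologyIso H ≪≫
    H.mapIso (Q.isoLeftDerivedObj F' n).symm

end ProjectiveResolutions

section BaseChange

open Limits TensorProduct

universe u

variable (R S : Type u) [CommRing R] [CommRing S] [Algebra R S]

/-- The base change functor `S ⊗[R] -`. Unlike `ModuleCat.extendScalars`, it uses the given
`R`-module structure on `S`, not the one induced by `algebraMap R S`. -/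
noncomputable def baseChangeFunctor : ModuleCat.{u} R ⥤ ModuleCat.{u} S where
  obj N := ModuleCat.of S (S ⊗[R] N)
  map g := ModuleCat.ofHom (g.hom.baseChange S)
  map_id N := by ext; simp
  map_comp f g := by ext; simp

instance : (baseChangeFunctor R S).Additive where
  map_add {_ _ f g} := ModuleCat.hom_ext (LinearMap.baseChange_add f.hom g.hom)

instance : (baseChangeFunctor R S).PreservesProjectiveObjects where
  projective_obj {N} hN :=
    have : Module.Projective R N := (IsProjective.iff_projective N).2 hN
    (IsProjective.iff_projective (R := S) (S ⊗[R] N)).1 inferInstance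

instance : PreservesFiniteColimits (baseChangeFunctor R S) := by
  have h (T : ShortComplex (ModuleCat.{u} R)) (hT : T.ShortExact) :
      (T.map (baseChangeFunctor R S)).Exact ∧ Epi ((baseChangeFunctor R S).map T.g) := by
    rw [ShortComplex.ShortExact.moduleCat_exact_iff_function_exact, ModuleCat.epi_iff_surjective]
    exact ⟨lTensor_exact S
      ((ShortComplex.ShortExact.moduleCat_exact_iff_function_exact T).1 hT.exact)
      hT.moduleCat_surjective_g, LinearMap.lTensor_surjective S hT.moduleCat_surjective_g⟩
  exact ((Functor.preservesFiniteColimits_tfae (baseChangeFunctor R S)).out 0 3).1 h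

variable {R}

theorem cancelBaseChange_symm_lTensor (M : Type*) {N N' : Type*} [AddCommGroup M] [AddCommGroup N]
    [AddCommGroup N'] [Module R M] [Module S M] [IsScalarTower R S M] [Module R N] [Module R N']
    (g : N →ₗ[R] N') (a : M ⊗[R] N) :
    (AlgebraTensorModule.cancelBaseChange R S S M N').symm (g.lTensor M a) =
      (g.baseChange S).lTensor M ((AlgebraTensorModule.cancelBaseChange R S S M N).symm a) := by
  induction a with
  | zero => simp only [map_zero]
  | add a b ha hb => simp only [map_add, ha, hb]
  | tmul m y => simp

/-- The natural isomorphism `M ⊗[R] N ≅ M ⊗[S] (S ⊗[R] N)`. -/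
noncomputable def tensoringLeftIsoBaseChange (M : Type u) [AddCommGroup M] [Module R M]
    [Module S M] [IsScalarTower R S M] :
    (MonoidalCategory.tensoringLeft (ModuleCat R)).obj (ModuleCat.of R M) ≅
      baseChangeFunctor R S ⋙
        (MonoidalCategory.tensoringLeft (ModuleCat S)).obj (ModuleCat.of S M) ⋙
        ModuleCat.restrictScalars (algebraMap R S) :=
  NatIso.ofComponents
    (fun N =>
      let e : M ⊗[R] N ≃ₗ[R] (ModuleCat.restrictScalars (algebraMap R S)).obj
          (ModuleCat.of S (M ⊗[S] (S ⊗[R] N))) :=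
        { __ := (AlgebraTensorModule.cancelBaseChange R S S M N).symm.toAddEquiv
          map_smul' r a := by
            rw [← algebraMap_smul S]
            exact map_smul (AlgebraTensorModule.cancelBaseChange R S S M N).symm _ a }
      e.toModuleIso)
    fun {N N'} g => ModuleCat.hom_ext (LinearMap.ext fun a =>
      cancelBaseChange_symm_lTensor S M g.hom a)

theorem baseChange_exact_of_isSMulRegular {x : R} {A B C D : Type*}
    [AddCommGroup A] [AddCommGroup B] [AddCommGroup C] [AddCommGroup D]
    [Module R A] [Module R B] [Module R C] [Module R D] {f : A →ₗ[R] B} {g : B →ₗ[R] C}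
    {h : C →ₗ[R] D} (hfg : Function.Exact f g) (hgh : Function.Exact g h)
    (hx : IsSMulRegular D x) :
    Function.Exact (f.baseChange (R ⧸ Ideal.span {x})) (g.baseChange (R ⧸ Ideal.span {x})) :=
  (Function.Exact.iff_of_ladder_linearEquiv
    (QuotSMulTop.equivQuotTensor_naturality x f).symm
    (QuotSMulTop.equivQuotTensor_naturality x g).symm).2
    (QuotSMulTop.map_first_exact_on_four_term_exact_of_isSMulRegular_last hfg hgh hx)

theorem isSMulRegular_of_projective {x : R} (hx : IsSMulRegular R x) (N : ModuleCat.{u} R)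
    (hN : Projective N) : IsSMulRegular N x :=
  have : Module.Projective R N := (IsProjective.iff_projective N).2 hN
  Module.Flat.isSMulRegular_of_isRegular ((Commute.isRegular_iff (mul_comm x)).2 hx)

theorem baseChange_exactAt {x : R} (hx : IsSMulRegular R x) {Z : ModuleCat.{u} R}
    (hZ : IsSMulRegular Z x) (P : ProjectiveResolution Z) (n : ℕ) :
    (((baseChangeFunctor R (R ⧸ Ideal.span {x})).mapHomologicalComplex _).obj
      P.complex).ExactAt (n + 1) := by
  rw [HomologicalComplex.exactAt_iff' _ (n + 1 + 1) (n + 1) n (by simp) (by simp),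
    ShortComplex.ShortExact.moduleCat_exact_iff_function_exact]
  have hP (n) := (ShortComplex.ShortExact.moduleCat_exact_iff_function_exact _).1 (P.exact_succ n)
  cases n with
  | zero =>
    exact baseChange_exact_of_isSMulRegular (hP 0)
      ((ShortComplex.ShortExact.moduleCat_exact_iff_function_exact _).1 (exact_d_augmentationMap P))
      hZ
  | succ n =>
    exact baseChange_exact_of_isSMulRegular (hP (n + 1)) (hP n)
      (isSMulRegular_of_projective hx _ (P.projective n))

/-- Change of rings for Tor: `Torₙ^R(M, Z) ≅ Torₙ^{R/xR}(M, Z/xZ)` for an `R/xR`-module `M`, when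
`x` is regular on `R` and on `Z`. -/
noncomputable def torIsoBaseChange {x : R} (hx : IsSMulRegular R x) (M : Type u) [AddCommGroup M]
    [Module R M] [Module (R ⧸ Ideal.span {x}) M] [IsScalarTower R (R ⧸ Ideal.span {x}) M]
    (Z : ModuleCat.{u} R) (hZ : IsSMulRegular Z x) (n : ℕ) :
    ((Tor (ModuleCat R) n).obj (ModuleCat.of R M)).obj Z ≅
      (ModuleCat.restrictScalars (algebraMap R (R ⧸ Ideal.span {x}))).obj
        (((Tor (ModuleCat (R ⧸ Ideal.span {x})) n).obj (ModuleCat.of _ M)).obj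
          ((baseChangeFunctor R (R ⧸ Ideal.span {x})).obj Z)) :=
  leftDerivedCompIso (tensoringLeftIsoBaseChange _ M) (projectiveResolution Z)
    (baseChange_exactAt hx hZ _) n

end BaseChange

section Tor

open TensorProduct

universe u

variable {R : Type u} [CommRing R]

theorem exists_projectiveResolution_finite [IsNoetherianRing R] (Z : ModuleCat.{u} R)
    [Module.Finite R Z] (n : ℕ) :
    ∃ P : ProjectiveResolution Z, Module.Finite R (P.complex.X n) := by
  have (m : ℕ) : Projective (ModuleCat.of R (Fin m → R)) :=
    (IsProjective.iff_projective (Fin m → R)).1 inferInstance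
  induction n generalizing Z with
  | zero =>
    obtain ⟨m, f, hf⟩ := Module.Finite.exists_fin' R Z
    exact ⟨spliceProjectiveResolution (projectiveResolution _)
      (LinearMap.shortExact_shortComplexKer hf), inferInstanceAs (Module.Finite R (Fin m → R))⟩
  | succ n ih =>
    obtain ⟨m, f, hf⟩ := Module.Finite.exists_fin' R Z
    obtain ⟨Q, hQ⟩ := ih (ModuleCat.of R (LinearMap.ker f))
    exact ⟨spliceProjectiveResolution (S := f.shortComplexKer) Q
      (LinearMap.shortExact_shortComplexKer hf), hQ⟩

theorem finite_homology [IsNoetherianRing R] {ι : Type*} {c : ComplexShape ι}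
    (K : HomologicalComplex (ModuleCat.{u} R) c) (i : ι) [Module.Finite R (K.X i)] :
    Module.Finite R (K.homology i) :=
  have : Module.Finite R (K.cycles i) :=
    .of_injective (K.iCycles i).hom ((ModuleCat.mono_iff_injective _).1 inferInstance)
  .of_surjective (K.homologyπ i).hom ((ModuleCat.epi_iff_surjective _).1 inferInstance)

theorem finite_tor [IsNoetherianRing R] (M Z : ModuleCat.{u} R) [Module.Finite R M]
    [Module.Finite R Z] (n : ℕ) : Module.Finite R (((Tor (ModuleCat R) n).obj M).obj Z) := by
  obtain ⟨P, hP⟩ := exists_projectiveResolution_finite Z n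
  let K := (((MonoidalCategory.tensoringLeft (ModuleCat R)).obj M).mapHomologicalComplex
    (ComplexShape.down ℕ)).obj P.complex
  have : Module.Finite R (K.X n) := inferInstanceAs (Module.Finite R (M ⊗[R] P.complex.X n))
  let e : ((Tor (ModuleCat R) n).obj M).obj Z ≅ K.homology n := P.isoLeftDerivedObj _ n
  have : Module.Finite R (K.homology n) := finite_homology K n
  exact .equiv e.toLinearEquiv.symm

variable (M : ModuleCat.{u} R)

instance tor_additive (n : ℕ) : ((Tor (ModuleCat R) n).obj M).Additive :=
  leftDerived_additive _ n

/-- Additivity of `Torₙ(M, -)` on binary products. -/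
noncomputable def torProdEquiv (A B : Type u) [AddCommGroup A] [AddCommGroup B] [Module R A]
    [Module R B] (n : ℕ) :
    ((Tor (ModuleCat R) n).obj M).obj (ModuleCat.of R (A × B)) ≃ₗ[R]
      ((Tor (ModuleCat R) n).obj M).obj (ModuleCat.of R A) ×
        ((Tor (ModuleCat R) n).obj M).obj (ModuleCat.of R B) :=
  let T := (Tor (ModuleCat R) n).obj M
  have := Limits.preservesBinaryBiproducts_of_preservesBiproducts T
  (T.mapIso (ModuleCat.biprodIsoProd (ModuleCat.of R A) (ModuleCat.of R B)).symm ≪≫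
    T.mapBiprod _ _ ≪≫ ModuleCat.biprodIsoProd _ _).toLinearEquiv

/-- Dimension shifting `Torₙ(M, R/I) ≅ Torₙ₋₁(M, I)` for `n ≥ 2`. -/
noncomputable def torQuotientIso (I : Ideal R) (n : ℕ) :
    ((Tor (ModuleCat R) (n + 2)).obj M).obj (ModuleCat.of R (R ⧸ I)) ≅
      ((Tor (ModuleCat R) (n + 1)).obj M).obj (ModuleCat.of R I) :=
  have : Projective (ModuleCat.of R R) := (IsProjective.iff_projective R).1 inferInstance
  let S := ModuleCat.shortComplexOfCompEqZero I.subtype (Submodule.mkQ I)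
    (LinearMap.exact_subtype_mkQ I).linearMap_comp_eq_zero
  have hS : S.ShortExact := ModuleCat.shortComplex_shortExact S (LinearMap.exact_subtype_mkQ I)
    I.injective_subtype (Submodule.mkQ_surjective I)
  leftDerivedDimensionShift ((MonoidalCategory.tensoringLeft _).obj M) hS n

end Tor

section FiberRank

open TensorProduct

/-- The dimension of the fibre `T ⧸ 𝔪T` of a module over a local ring at the closed point, that is,
the minimal number of generators of `T` when `T` is finitely generated. -/
noncomputable def fiberRank (R T : Type*) [CommRing R] [IsLocalRing R] [AddCommGroup T]
    [Module R T] : ℕ :=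
  Module.finrank (R ⧸ maximalIdeal R) (T ⧸ maximalIdeal R • (⊤ : Submodule R T))

variable {R : Type*} [CommRing R] [IsLocalRing R] {T T' : Type*} [AddCommGroup T] [AddCommGroup T']
  [Module R T] [Module R T']

variable (R T) in
theorem fiberRank_eq_toNat_length :
    fiberRank R T = (Module.length R (T ⧸ maximalIdeal R • (⊤ : Submodule R T))).toNat := by
  let := Ideal.Quotient.field (maximalIdeal R)
  rw [Module.length_eq_of_surjective (R := R ⧸ maximalIdeal R) Ideal.Quotient.mk_surjective,
    Module.length_eq_rank]
  simp [fiberRank, Module.finrank]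

theorem fiberRank_congr (e : T ≃ₗ[R] T') : fiberRank R T = fiberRank R T' := by
  have he : (maximalIdeal R • (⊤ : Submodule R T)).map (e : T →ₗ[R] T') = maximalIdeal R • ⊤ := by
    rw [Submodule.map_smul'', Submodule.map_top, LinearEquiv.range]
  rw [fiberRank_eq_toNat_length, fiberRank_eq_toNat_length,
    (Submodule.Quotient.equiv _ _ e he).length_eq]

theorem fiberRank_eq_of_surjective {S : Type*} [CommRing S] [IsLocalRing S] [Algebra R S]
    [Module S T] [IsScalarTower R S T] (h : Function.Surjective (algebraMap R S)) :
    fiberRank R T = fiberRank S T := by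
  have htop : maximalIdeal R • (⊤ : Submodule R T) =
      (maximalIdeal S • (⊤ : Submodule S T)).restrictScalars R := by
    rw [← map_maximalIdeal_of_surjective _ h, Ideal.smul_restrictScalars,
      Submodule.restrictScalars_top]
  rw [fiberRank_eq_toNat_length, fiberRank_eq_toNat_length, ← Module.length_eq_of_surjective h,
    htop, (Submodule.Quotient.restrictScalarsEquiv R _).length_eq]

variable (R T) in
theorem length_quotient_maximalIdeal_smul_top_ne_top [Module.Finite R T] :
    Module.length R (T ⧸ maximalIdeal R • (⊤ : Submodule R T)) ≠ ⊤ := by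
  let := Ideal.Quotient.field (maximalIdeal R)
  have : Module.Finite (R ⧸ maximalIdeal R) (T ⧸ maximalIdeal R • (⊤ : Submodule R T)) :=
    Module.Finite.of_restrictScalars_finite R _ _
  rw [Module.length_eq_of_surjective (R := R ⧸ maximalIdeal R) Ideal.Quotient.mk_surjective]
  exact Module.length_ne_top

variable (R T T') in
theorem fiberRank_prod [Module.Finite R T] [Module.Finite R T'] :
    fiberRank R (T × T') = fiberRank R T + fiberRank R T' := by
  let I := maximalIdeal R
  let e : ((T × T') ⧸ I • (⊤ : Submodule R (T × T'))) ≃ₗ[R]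
      (T ⧸ I • (⊤ : Submodule R T)) × (T' ⧸ I • (⊤ : Submodule R T')) :=
    (quotTensorEquivQuotSMul (T × T') I).symm ≪≫ₗ prodRight R R (R ⧸ I) T T' ≪≫ₗ
      (quotTensorEquivQuotSMul T I).prodCongr (quotTensorEquivQuotSMul T' I)
  rw [fiberRank_eq_toNat_length, e.length_eq, Module.length_prod,
    ENat.toNat_add (length_quotient_maximalIdeal_smul_top_ne_top R T)
      (length_quotient_maximalIdeal_smul_top_ne_top R T'),
    ← fiberRank_eq_toNat_length, ← fiberRank_eq_toNat_length]

end FiberRank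

section MaximalIdealQuotient

open Pointwise TensorProduct

variable {R : Type*} [CommRing R]

theorem surjective_prod_of_surjective {N K Q : Type*} [AddCommGroup N] [AddCommGroup K]
    [AddCommGroup Q] [Module R N] [Module R K] [Module R Q] {φ : N →ₗ[R] K} {ψ : N →ₗ[R] Q}
    {v : N} (hψ : Function.Surjective ψ) (hψv : ψ v = 0)
    (hφv : ∀ c, ∃ r : R, r • φ v = c) : Function.Surjective (φ.prod ψ) := by
  rintro ⟨c, q⟩
  obtain ⟨a, rfl⟩ := hψ q
  obtain ⟨r, hr⟩ := hφv (c - φ a)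
  refine ⟨a + r • v, Prod.ext ?_ ?_⟩
  · simp [hr]
  · simp [hψv]

variable [IsLocalRing R]

theorem exists_linearMap_maximalIdeal_apply_eq {x : R} (hx : x ∈ maximalIdeal R)
    (hx2 : x ∉ maximalIdeal R ^ 2) {K : Type*} [AddCommGroup K] [Module R K] {c : K}
    (hc : ∀ r ∈ maximalIdeal R, r • c = 0) :
    ∃ φ : maximalIdeal R →ₗ[R] K, φ ⟨x, hx⟩ = c := by
  obtain ⟨f, hf⟩ := Module.Projective.exists_dual_eq_one (ResidueField R)
    (mt ((maximalIdeal R).toCotangent_eq_zero ⟨x, hx⟩).1 hx2)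
  let g : ResidueField R →ₗ[R] K :=
    (maximalIdeal R).liftQ (LinearMap.toSpanSingleton R K c) hc
  refine ⟨g ∘ₗ f.restrictScalars R ∘ₗ (maximalIdeal R).toCotangent, ?_⟩
  calc g (f ((maximalIdeal R).toCotangent ⟨x, hx⟩)) = g 1 := by rw [hf]
    _ = c := one_smul R c

theorem algebraMap_mem_maximalIdeal_iff {S : Type*} [CommRing S] [IsLocalRing S] [Algebra R S]
    (h : Function.Surjective (algebraMap R S)) {r : R} :
    algebraMap R S r ∈ maximalIdeal S ↔ r ∈ maximalIdeal R :=
  have := IsLocalHom.of_surjective _ h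
  map_mem_nonunits_iff (algebraMap R S) r

variable {x : R} [IsLocalRing (R ⧸ Ideal.span {x})]

variable (x) in
/-- The quotient map `R → R/xR` restricted to the maximal ideals `𝔪 → 𝔪/xR`. -/
def maximalIdealToQuotient : maximalIdeal R →ₗ[R] maximalIdeal (R ⧸ Ideal.span {x}) :=
  (Algebra.linearMap R (R ⧸ Ideal.span {x})).restrict
    (q := (maximalIdeal (R ⧸ Ideal.span {x})).restrictScalars R)
    fun _ => (algebraMap_mem_maximalIdeal_iff Ideal.Quotient.mk_surjective).2

variable (x) in
theorem maximalIdealToQuotient_surjective : Function.Surjective (maximalIdealToQuotient x) := by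
  rintro ⟨s, hs⟩
  obtain ⟨r, rfl⟩ := Ideal.Quotient.mk_surjective s
  exact ⟨⟨r, (algebraMap_mem_maximalIdeal_iff Ideal.Quotient.mk_surjective).1 hs⟩, rfl⟩

theorem maximalIdealToQuotient_eq_zero_iff (hx : x ∈ maximalIdeal R) {a : maximalIdeal R} :
    maximalIdealToQuotient x a = 0 ↔ ∃ r : R, r • ⟨x, hx⟩ = a := by
  simp_rw [Subtype.ext_iff]
  exact Ideal.Quotient.eq_zero_iff_mem.trans Ideal.mem_span_singleton'

section SplitOff

variable (hx : x ∈ maximalIdeal R) {K : Type*} [AddCommGroup K] [Module R K]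
  {φ : maximalIdeal R →ₗ[R] K}

theorem surjective_prod_maximalIdealToQuotient (hφ : ∀ c, ∃ r : R, r • φ ⟨x, hx⟩ = c) :
    Function.Surjective (φ.prod (maximalIdealToQuotient x)) :=
  surjective_prod_of_surjective (maximalIdealToQuotient_surjective x)
    ((maximalIdealToQuotient_eq_zero_iff hx).2 ⟨1, one_smul _ _⟩) hφ

theorem ker_prod_maximalIdealToQuotient (hφ : ∀ r : R, r • φ ⟨x, hx⟩ = 0 ↔ r ∈ maximalIdeal R) :
    LinearMap.ker (φ.prod (maximalIdealToQuotient x)) = x • ⊤ := by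
  ext a
  rw [LinearMap.ker_prod, Submodule.mem_inf, LinearMap.mem_ker, LinearMap.mem_ker,
    maximalIdealToQuotient_eq_zero_iff hx, Submodule.mem_smul_pointwise_iff_exists]
  constructor
  · rintro ⟨ha, r, rfl⟩
    rw [map_smul, hφ] at ha
    exact ⟨⟨r, ha⟩, trivial, Subtype.ext (mul_comm x r)⟩
  · rintro ⟨r, -, rfl⟩
    have hr : x • r = (r : R) • (⟨x, hx⟩ : maximalIdeal R) := Subtype.ext (mul_comm x (r : R))
    exact ⟨by rw [hr, map_smul, (hφ r).2 r.2], r, hr.symm⟩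

end SplitOff

theorem nonempty_quotSMulTop_maximalIdeal_equiv (hx : x ∈ maximalIdeal R)
    (hx2 : x ∉ maximalIdeal R ^ 2) {K : Type*} [AddCommGroup K] [Module R K] {c : K}
    (hc : ∀ r : R, r • c = 0 ↔ r ∈ maximalIdeal R) (hspan : ∀ d : K, ∃ r : R, r • c = d) :
    Nonempty (QuotSMulTop x (maximalIdeal R) ≃ₗ[R] K × maximalIdeal (R ⧸ Ideal.span {x})) := by
  obtain ⟨φ, rfl⟩ := exists_linearMap_maximalIdeal_apply_eq hx hx2 fun r => (hc r).2
  exact ⟨Submodule.quotEquivOfEq _ _ (ker_prod_maximalIdealToQuotient hx hc).symm ≪≫ₗ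
    LinearMap.quotKerEquivOfSurjective _ (surjective_prod_maximalIdealToQuotient hx hspan)⟩

theorem nonempty_quotient_tensor_maximalIdeal_equiv (hx : x ∈ maximalIdeal R)
    (hx2 : x ∉ maximalIdeal R ^ 2) :
    Nonempty ((R ⧸ Ideal.span {x}) ⊗[R] maximalIdeal R ≃ₗ[R ⧸ Ideal.span {x}]
      ((R ⧸ Ideal.span {x}) ⧸ maximalIdeal (R ⧸ Ideal.span {x})) ×
        maximalIdeal (R ⧸ Ideal.span {x})) := by
  let S := R ⧸ Ideal.span {x}
  have hmk : Function.Surjective (algebraMap R S) := Ideal.Quotient.mk_surjective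
  have smul_one (r : R) : r • (1 : S ⧸ maximalIdeal S) = Ideal.Quotient.mk _ (algebraMap R S r) :=
    (Algebra.algebraMap_eq_smul_one r).symm
  have smul_one_eq_zero (r : R) : r • (1 : S ⧸ maximalIdeal S) = 0 ↔ r ∈ maximalIdeal R := by
    rw [smul_one, Ideal.Quotient.eq_zero_iff_mem, algebraMap_mem_maximalIdeal_iff hmk]
  have smul_one_surjective (c : S ⧸ maximalIdeal S) : ∃ r : R, r • 1 = c := by
    simp_rw [smul_one]
    exact Ideal.Quotient.mk_surjective.comp hmk c
  obtain ⟨e⟩ := nonempty_quotSMulTop_maximalIdeal_equiv hx hx2 smul_one_eq_zero smul_one_surjective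
  exact ⟨((QuotSMulTop.equivQuotTensor x (maximalIdeal R)).symm ≪≫ₗ e).extendScalarsOfSurjective
    hmk⟩

end MaximalIdealQuotient

section Betti

open TensorProduct

universe u

theorem betti_eq_fiberRank_tor_maximalIdeal (R M : Type) [CommRing R] [IsLocalRing R]
    [AddCommGroup M] [Module R M] (n : ℕ) :
    betti R M (n + 2) = fiberRank R
      (((Tor (ModuleCat R) (n + 1)).obj (ModuleCat.of R M)).obj
        (ModuleCat.of R (maximalIdeal R))) :=
  fiberRank_congr (torQuotientIso _ (maximalIdeal R) n).toLinearEquiv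

theorem fiberRank_tor_eq_fiberRank_tor_baseChange {R : Type u} [CommRing R] [IsLocalRing R] {x : R}
    (hx : IsSMulRegular R x) [IsLocalRing (R ⧸ Ideal.span {x})] {M Z : Type u} [AddCommGroup M]
    [Module R M] [Module (R ⧸ Ideal.span {x}) M] [IsScalarTower R (R ⧸ Ideal.span {x}) M]
    [AddCommGroup Z] [Module R Z] (hZ : IsSMulRegular Z x) (n : ℕ) :
    fiberRank R (((Tor (ModuleCat R) n).obj (ModuleCat.of R M)).obj (ModuleCat.of R Z)) =
      fiberRank (R ⧸ Ideal.span {x})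
        (((Tor (ModuleCat (R ⧸ Ideal.span {x})) n).obj (ModuleCat.of _ M)).obj
          (ModuleCat.of _ ((R ⧸ Ideal.span {x}) ⊗[R] Z))) := by
  let S := R ⧸ Ideal.span {x}
  let T := ((Tor (ModuleCat S) n).obj (ModuleCat.of S M)).obj (ModuleCat.of S (S ⊗[R] Z))
  let : Module R T := .compHom T (algebraMap R S)
  have : IsScalarTower R S T := .of_algebraMap_smul fun _ _ => rfl
  have e : ((Tor (ModuleCat R) n).obj (ModuleCat.of R M)).obj (ModuleCat.of R Z) ≃ₗ[R] T :=
    (torIsoBaseChange hx M (ModuleCat.of R Z) hZ n).toLinearEquiv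
  rw [fiberRank_congr e, fiberRank_eq_of_surjective (S := S) Ideal.Quotient.mk_surjective]

theorem betti_add_two_eq_add (R : Type) [CommRing R] [IsNoetherianRing R] [IsLocalRing R] {x : R}
    (hx : x ∈ maximalIdeal R) (hx2 : x ∉ maximalIdeal R ^ 2) (hxreg : IsSMulRegular R x)
    [IsLocalRing (R ⧸ Ideal.span {x})] (M : Type) [AddCommGroup M] [Module R M] [Module.Finite R M]
    [Module (R ⧸ Ideal.span {x}) M] [IsScalarTower R (R ⧸ Ideal.span {x}) M] (n : ℕ) :
    betti R M (n + 2) =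
      betti (R ⧸ Ideal.span {x}) M (n + 1) + betti (R ⧸ Ideal.span {x}) M (n + 2) := by
  let S := R ⧸ Ideal.span {x}
  let T := (Tor (ModuleCat S) (n + 1)).obj (ModuleCat.of S M)
  have : Module.Finite S M := .of_restrictScalars_finite R S M
  have (Z : ModuleCat S) [Module.Finite S Z] : Module.Finite S (T.obj Z) := finite_tor _ _ _
  have hxm : IsSMulRegular (maximalIdeal R) x := hxreg.submodule _ _
  obtain ⟨e⟩ := nonempty_quotient_tensor_maximalIdeal_equiv hx hx2
  calc betti R M (n + 2)
      = fiberRank S (T.obj (ModuleCat.of S (S ⊗[R] maximalIdeal R))) := by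
        rw [betti_eq_fiberRank_tor_maximalIdeal,
          fiberRank_tor_eq_fiberRank_tor_baseChange hxreg hxm]
    _ = fiberRank S (T.obj (ModuleCat.of S (S ⧸ maximalIdeal S)) ×
          T.obj (ModuleCat.of S (maximalIdeal S))) :=
        fiberRank_congr ((T.mapIso e.toModuleIso).toLinearEquiv ≪≫ₗ torProdEquiv _ _ _ _)
    _ = betti S M (n + 1) + betti S M (n + 2) := by
        rw [fiberRank_prod, betti_eq_fiberRank_tor_maximalIdeal]
        rfl

end Betti

section Growth

open Filter Asymptotics Topology

theorem limsup_eq_of_eventually_le_of_forall_lt {ι : Type*} {l : Filter ι} [l.NeBot]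
    {u v : ι → ℝ} (hv : 0 ≤ᶠ[l] v) (hvu : v ≤ᶠ[l] u)
    (h : ∀ a b, a < b → (∀ᶠ i in l, v i ≤ a) → ∀ᶠ i in l, u i ≤ b) :
    limsup u l = limsup v l := by
  have hu_co : l.IsCoboundedUnder (· ≤ ·) u :=
    (isBoundedUnder_of_eventually_ge (hv.trans hvu)).isCoboundedUnder_le
  have hv_co : l.IsCoboundedUnder (· ≤ ·) v :=
    (isBoundedUnder_of_eventually_ge hv).isCoboundedUnder_le
  by_cases hv_bdd : l.IsBoundedUnder (· ≤ ·) v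
  · have hu_bdd : l.IsBoundedUnder (· ≤ ·) u := by
      obtain ⟨a, ha⟩ := hv_bdd.eventually_le
      exact isBoundedUnder_of_eventually_le (h a (a + 1) (lt_add_one a) ha)
    refine le_antisymm (le_of_forall_gt_imp_ge_of_dense fun b hb => ?_)
      (limsup_le_limsup hvu hv_co hu_bdd)
    obtain ⟨a, hva, hab⟩ := exists_between hb
    exact limsup_le_of_le hu_co
      (h a b hab ((eventually_lt_of_limsup_lt hva hv_bdd).mono fun _ => le_of_lt))
  · have hu_bdd : ¬ l.IsBoundedUnder (· ≤ ·) u := fun hu => hv_bdd (hu.mono_le hvu)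
    rw [Real.limsup_of_not_isBoundedUnder hu_bdd, Real.limsup_of_not_isBoundedUnder hv_bdd]

theorem rpow_inv_natCast_le_iff {a c : ℝ} {n : ℕ} (ha : 0 ≤ a) (hc : 0 ≤ c) (hn : n ≠ 0) :
    a ^ (n : ℝ)⁻¹ ≤ c ↔ a ≤ c ^ n := by
  rw [Real.rpow_inv_le_iff_of_pos ha hc (by positivity), Real.rpow_natCast]

theorem natCast_rpow_isBigO_succ (d : ℝ) :
    (fun n : ℕ => (n : ℝ) ^ d) =O[atTop] fun n : ℕ => ((n + 1 : ℕ) : ℝ) ^ d := by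
  have h : Tendsto (fun n : ℕ => ((n : ℝ) / (n + 1 : ℕ)) ^ d) atTop (𝓝 1) := by
    simpa using (tendsto_natCast_div_add_atTop (1 : ℝ)).rpow_const (p := d) (.inl one_ne_zero)
  refine isBigO_of_div_tendsto_nhds (.of_forall fun n hn => ?_) 1 (h.congr fun n => ?_)
  · exact absurd hn (by positivity)
  · exact Real.div_rpow (by positivity) (by positivity) d

theorem pow_isBigO_succ {c : ℝ} (hc : c ≠ 0) :
    (fun n : ℕ => c ^ n) =O[atTop] fun n : ℕ => c ^ (n + 1) := by
  simp_rw [pow_succ']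
  exact isBigO_self_const_mul hc _ _

theorem isBigO_natCast_rpow_iff {u : ℕ → ℝ} (hu : 0 ≤ᶠ[atTop] u) (d : ℝ) :
    u =O[atTop] (fun n : ℕ => (n : ℝ) ^ d) ↔
      ∃ α : ℝ, 0 < α ∧ ∃ N : ℕ, ∀ n : ℕ, N ≤ n → u n ≤ α * (n : ℝ) ^ d := by
  simp_rw [isBigO_iff', gt_iff_lt, ← eventually_atTop]
  refine exists_congr fun α => and_congr_right fun _ => eventually_congr (hu.mono fun n hn => ?_)
  rw [Real.norm_of_nonneg hn, Real.norm_of_nonneg (by positivity)]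

variable {u v : ℕ → ℝ}

theorem isBigO_of_eq_add (h : ∀ n, u (n + 2) = v (n + 1) + v (n + 2)) {g : ℕ → ℝ}
    (hg : g =O[atTop] fun n => g (n + 1)) (hvg : v =O[atTop] g) : u =O[atTop] g := by
  have hvg' (k : ℕ) : (fun n => v (n + k)) =O[atTop] fun n => g (n + k) :=
    hvg.comp_tendsto (tendsto_add_atTop_nat k)
  have hg' : (fun n => g (n + 1)) =O[atTop] fun n => g (n + 2) :=
    hg.comp_tendsto (tendsto_add_atTop_nat 1)
  rw [← map_add_atTop_eq_nat 2, isBigO_map]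
  exact (((hvg' 1).trans hg').add (hvg' 2)).congr_left fun n => (h n).symm

theorem eventually_le_of_eq_add (hv : ∀ n, 0 ≤ v n)
    (h : ∀ n, u (n + 2) = v (n + 1) + v (n + 2)) : v ≤ᶠ[atTop] u := by
  rw [EventuallyLE, ← map_add_atTop_eq_nat 2, eventually_map]
  filter_upwards with n
  linarith [h n, hv (n + 1)]

theorem isBigO_iff_of_eq_add (hv : ∀ n, 0 ≤ v n)
    (h : ∀ n, u (n + 2) = v (n + 1) + v (n + 2)) {g : ℕ → ℝ}
    (hg : g =O[atTop] fun n => g (n + 1)) : u =O[atTop] g ↔ v =O[atTop] g := by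
  refine ⟨fun hug => .trans (.of_bound' ?_) hug, isBigO_of_eq_add h hg⟩
  filter_upwards [eventually_le_of_eq_add hv h] with n hn
  exact abs_le_abs_of_nonneg (hv n) hn

theorem limsup_rpow_inv_eq_of_eq_add (hv : ∀ n, 0 ≤ v n)
    (h : ∀ n, u (n + 2) = v (n + 1) + v (n + 2)) :
    limsup (fun n : ℕ => u n ^ (n : ℝ)⁻¹) atTop = limsup (fun n : ℕ => v n ^ (n : ℝ)⁻¹) atTop := by
  have hvu := eventually_le_of_eq_add hv h
  have hroot (n : ℕ) : 0 ≤ v n ^ (n : ℝ)⁻¹ := Real.rpow_nonneg (hv n) _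
  refine limsup_eq_of_eventually_le_of_forall_lt (.of_forall hroot) ?_ fun a b hab ha => ?_
  · filter_upwards [hvu] with n hn
    exact Real.rpow_le_rpow (hv n) hn (by positivity)
  · obtain ⟨c, hac, hcb⟩ := exists_between hab
    have ha0 : 0 ≤ a := ha.exists.elim fun n hn => (hroot n).trans hn
    have hc : 0 < c := ha0.trans_lt hac
    have hvc : v =O[atTop] fun n => c ^ n := by
      refine .of_bound' ?_
      filter_upwards [ha, eventually_ne_atTop 0] with n hn hn0
      rw [Real.norm_of_nonneg (hv n), Real.norm_of_nonneg (by positivity)]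
      exact (rpow_inv_natCast_le_iff (hv n) hc.le hn0).1 (hn.trans hac.le)
    have hub : u =o[atTop] fun n => b ^ n :=
      (isBigO_of_eq_add h (pow_isBigO_succ hc.ne') hvc).trans_isLittleO
        (isLittleO_pow_pow_of_lt_left hc.le hcb)
    filter_upwards [hub.bound one_pos, hvu, eventually_ne_atTop 0] with n hn hvun hn0
    have hb : 0 ≤ b := (hc.trans hcb).le
    rw [one_mul, Real.norm_of_nonneg (by positivity : 0 ≤ b ^ n)] at hn
    exact (rpow_inv_natCast_le_iff ((hv n).trans hvun) hb hn0).2 ((le_abs_self _).trans hn)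

end Growth

theorem statement12 (R : Type) [CommRing R] [IsNoetherianRing R] [IsLocalRing R]
    (x : R) (hx : x ∈ maximalIdeal R) (hx2 : x ∉ maximalIdeal R ^ 2)
    (hxreg : IsSMulRegular R x)
    [IsLocalRing (R ⧸ Ideal.span {x})]
    (M : Type) [AddCommGroup M] [Module R M] [Module.Finite R M]
    [Module (R ⧸ Ideal.span {x}) M]
    (hcompat : ∀ (r : R) (a : M), (Ideal.Quotient.mk (Ideal.span {x}) r) • a = r • a)
    (hxM : ∀ a : M, x • a = 0) :
    (∀ n : ℕ, 2 ≤ n →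
      betti (R ⧸ Ideal.span {x}) M (n - 1) ≤ betti R M n ∧
      betti R M n ≤ betti (R ⧸ Ideal.span {x}) M n + betti (R ⧸ Ideal.span {x}) M (n - 1)) ∧
    (∀ b : ℕ,
      (∃ α : ℝ, 0 < α ∧ ∃ N : ℕ, ∀ n : ℕ, N ≤ n →
          (betti R M n : ℝ) ≤ α * (n : ℝ) ^ ((b : ℝ) - 1)) ↔
      (∃ α : ℝ, 0 < α ∧ ∃ N : ℕ, ∀ n : ℕ, N ≤ n →
          (betti (R ⧸ Ideal.span {x}) M n : ℝ) ≤ α * (n : ℝ) ^ ((b : ℝ) - 1))) ∧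
    Filter.limsup (fun n : ℕ => (betti R M n : ℝ) ^ ((n : ℝ)⁻¹)) Filter.atTop =
      Filter.limsup (fun n : ℕ =>
        (betti (R ⧸ Ideal.span {x}) M n : ℝ) ^ ((n : ℝ)⁻¹)) Filter.atTop := by
  have : IsScalarTower R (R ⧸ Ideal.span {x}) M := .of_algebraMap_smul hcompat
  have h := betti_add_two_eq_add R hx hx2 hxreg M
  have h_real (n : ℕ) : (betti R M (n + 2) : ℝ) =
      betti (R ⧸ Ideal.span {x}) M (n + 1) + betti (R ⧸ Ideal.span {x}) M (n + 2) :=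
    mod_cast h n
  refine ⟨fun n hn => ?_, fun b => ?_, limsup_rpow_inv_eq_of_eq_add (fun _ => by positivity) h_real⟩
  · obtain ⟨k, rfl⟩ := Nat.exists_eq_add_of_le' hn
    rw [h k, show k + 2 - 1 = k + 1 from rfl]
    omega
  · rw [← isBigO_natCast_rpow_iff (.of_forall fun _ => by positivity),
      ← isBigO_natCast_rpow_iff (.of_forall fun _ => by positivity)]
    exact isBigO_iff_of_eq_add (fun _ => by positivity) h_real (natCast_rpow_isBigO_succ _)
end

section
/- Let (R, m, k) be a Cohen–Macaulay commutative Noetherian local ring of dimension d with minimal multiplicity, i.e., there exists an R-regular sequence x₁, …, x_d ∈ m with m² = (x₁, …, x_d)m. Let M be a finitely generated R-module with t = depth_R M. Then M is (2d − t + 2)-Tor-rigid: for every finitely generated R-module N, if Tor_i^R(M, N) = 0 for all n ≤ i ≤ n + 2d − t + 1 for some n ≥ 1, then Tor_i^R(M, N) = 0 for all i ≥ n. In particular, every maximal Cohen–Macaulay R-module is (d+2)-Tor-rigid, and every finitely generated R-module is (2d+2)-Tor-rigid. -/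
open CategoryTheory IsLocalRing

/-!
Let `I = (x₁, …, x_d)`, so that `m² ⊆ I`. Since `I` is generated by a regular sequence,
`Tor_j(M, R/I)` vanishes for `j > d`; as `m²` kills `R/I`, an `M`-regular sequence of length `t`
lowers this bound to `j > d - t`. Replacing `M` by its `(d - t)`-th syzygy, one may assume that
`Tor_j(M, R/I) = 0` for all `j > 0`. If `0 → K → F → M → 0` is a minimal presentation with `F` free,
then `K ∩ IF = IK`, hence `mK ⊆ m²F ∩ K ⊆ IK`, and `x₁, …, x_d` is `K`-regular. So `K/IK` is a
vector space over `k`, and `d + 1` consecutive zeros of `Tor(K, N)` produce a zero of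
`Tor(K/IK, N)`. Either `K = 0` and `M` is free, or `k` is a summand of `K/IK`, so that some
`Tor_p(k, N)` vanishes and `N` has finite projective dimension.
-/

section LeftDerived

universe v₁ v₂ u₁ u₂

variable {C : Type u₁} [Category.{v₁} C] [Abelian C] {D : Type u₂} [Category.{v₂} D] [Abelian D]

section LongExact

variable {F G H : C ⥤ D} [F.Additive] [G.Additive] [H.Additive] {α : F ⟶ G} {β : G ⟶ H}

theorem shortExact_mapHomologicalComplex_app (w : α ≫ β = 0)
    (h : ∀ (P : C) [Projective P],
      (ShortComplex.mk (α.app P) (β.app P) (congr_app w P)).ShortExact)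
    (K : ChainComplex C ℕ) [∀ i, Projective (K.X i)] :
    (ShortComplex.mk ((NatTrans.mapHomologicalComplex α _).app K)
      ((NatTrans.mapHomologicalComplex β _).app K)
      (by ext i; exact congr_app w (K.X i))).ShortExact :=
  HomologicalComplex.shortExact_of_degreewise_shortExact _ fun i => h (K.X i)

theorem exists_leftDerived_longExact [HasProjectiveResolutions C] (w : α ≫ β = 0)
    (h : ∀ (P : C) [Projective P],
      (ShortComplex.mk (α.app P) (β.app P) (congr_app w P)).ShortExact) (X : C) (n : ℕ) :
    ∃ δ : (H.leftDerived (n + 1)).obj X ⟶ (F.leftDerived n).obj X,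
      (ComposableArrows.mk₅ ((NatTrans.leftDerived α (n + 1)).app X)
        ((NatTrans.leftDerived β (n + 1)).app X) δ
        ((NatTrans.leftDerived α n).app X) ((NatTrans.leftDerived β n).app X)).Exact := by
  let P := projectiveResolution X
  have hS := shortExact_mapHomologicalComplex_app w h P.complex
  refine ⟨(P.isoLeftDerivedObj H (n + 1)).hom ≫ hS.δ (n + 1) n rfl ≫
    (P.isoLeftDerivedObj F n).inv, ComposableArrows.exact_of_iso (ComposableArrows.isoMk₅
      (P.isoLeftDerivedObj F (n + 1)).symm (P.isoLeftDerivedObj G (n + 1)).symm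
      (P.isoLeftDerivedObj H (n + 1)).symm (P.isoLeftDerivedObj F n).symm
      (P.isoLeftDerivedObj G n).symm (P.isoLeftDerivedObj H n).symm ?_ ?_ ?_ ?_ ?_)
      (HomologicalComplex.HomologySequence.composableArrows₅_exact hS (n + 1) n rfl)⟩
  case refine_3 => exact (Iso.inv_hom_id_assoc _ _).symm
  all_goals exact (Iso.eq_inv_comp _).2 (P.leftDerived_app_eq _ _).symm

end LongExact

section Linear

variable {k : Type*} [CommRing k] [Linear k D] {F G : C ⥤ D} [F.Additive] [G.Additive]

instance homologyFunctor_linear {ι : Type*} (c : ComplexShape ι) (i : ι) :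
    (HomologicalComplex.homologyFunctor D c i).Linear k where
  map_smul φ r := ShortComplex.homologyMap_smul (a := r)
    (φ := (HomologicalComplex.shortComplexFunctor D c i).map φ)

variable [HasProjectiveResolutions C]

theorem leftDerived_smul_app (r : k) (α : F ⟶ G) (n : ℕ) (X : C) :
    (NatTrans.leftDerived (r • α) n).app X = r • (NatTrans.leftDerived α n).app X := by
  let P := projectiveResolution X
  have hmap : (NatTrans.mapHomologicalComplex (r • α) (ComplexShape.down ℕ)).app P.complex =
      r • (NatTrans.mapHomologicalComplex α _).app P.complex := rfl
  rw [P.leftDerived_app_eq, P.leftDerived_app_eq, hmap, Functor.map_smul, Linear.smul_comp,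
    Linear.comp_smul]

instance leftDerived_linear [Linear k C] [F.Linear k] (n : ℕ) : (F.leftDerived n).Linear k where
  map_smul {X Y} f r := by
    let P := projectiveResolution X
    let Q := projectiveResolution Y
    let φ := ProjectiveResolution.lift f P Q
    have hφ : φ ≫ Q.π = P.π ≫ (ChainComplex.single₀ C).map f :=
      ProjectiveResolution.lift_commutes f P Q
    have hrφ : (r • φ) ≫ Q.π = P.π ≫ (ChainComplex.single₀ C).map (r • f) := by
      rw [Linear.smul_comp, hφ]
      ext
      simp only [HomologicalComplex.comp_f, HomologicalComplex.smul_f_apply,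
        ChainComplex.single₀_map_f_zero]
      exact (Linear.comp_smul (P.complex.X 0) X Y (P.π.f 0) r f).symm
    rw [F.leftDerived_map_eq n f φ hφ, F.leftDerived_map_eq n (r • f) (r • φ) hrφ,
      Functor.map_smul, Linear.smul_comp, Linear.comp_smul]

end Linear

/-- The resolution `⋯ → P₂ → P₁ → K` of a first syzygy `K` of `X`, given as the cokernel
`p : P₁ → K` of `P₂ → P₁`, obtained from a projective resolution `P` of `X` by dropping `P₀`. -/
noncomputable def truncatedResolution {X K : C} (P : ProjectiveResolution X)
    (p : P.complex.X 1 ⟶ K) [Epi p] (w : P.complex.d 2 1 ≫ p = 0)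
    (hp : (ShortComplex.mk (P.complex.d 2 1) p w).Exact) : ProjectiveResolution K where
  complex := ChainComplex.truncate.obj P.complex
  projective n := P.projective (n + 1)
  π := (ChainComplex.toSingle₀Equiv _ _).symm ⟨p, w⟩
  quasiIso := ⟨fun n => by
    cases n with
    | zero =>
      rw [ChainComplex.quasiIsoAt₀_iff, ShortComplex.quasiIso_iff_of_zeros']
      · have exact_and_epi : ∀ (q : P.complex.X 1 ⟶ K) (hq : P.complex.d 2 1 ≫ q = 0), q = p →
            (ShortComplex.mk (P.complex.d 2 1) q hq).Exact ∧ Epi q := by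
          rintro _ _ rfl
          exact ⟨hp, ‹_›⟩
        exact exact_and_epi _ _ (ChainComplex.toSingle₀Equiv_symm_apply_f_zero _ _)
      all_goals first | rfl | exact P.complex.shape _ _ (by simp)
    | succ n =>
      rw [quasiIsoAt_iff_exactAt' _ _ (ChainComplex.exactAt_succ_single_obj _ _),
        HomologicalComplex.exactAt_iff' _ (n + 2) (n + 1) n (by simp) (by simp)]
      exact P.exact_succ (n + 1)⟩

end LeftDerived

section TorModule

open MonoidalCategory
open scoped TensorProduct

universe u

variable {R : Type u} [CommRing R] {A B C : Type u} [AddCommGroup A] [Module R A]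
  [AddCommGroup B] [Module R B] [AddCommGroup C] [Module R C]
  (N : Type u) [AddCommGroup N] [Module R N]

/-- The `R`-module `Tor_n^R(A, N)`, the `n`-th left derived functor of `A ⊗ -` at `N`. -/
noncomputable abbrev TorModule (R : Type u) [CommRing R] (A N : Type u) [AddCommGroup A]
    [Module R A] [AddCommGroup N] [Module R N] (n : ℕ) : ModuleCat.{u} R :=
  ((Tor (ModuleCat R) n).obj (ModuleCat.of R A)).obj (ModuleCat.of R N)

/-- The map `Tor_n^R(A, N) → Tor_n^R(B, N)` induced by a linear map `A → B`. -/
noncomputable abbrev torMap (f : A →ₗ[R] B) (n : ℕ) :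
    TorModule R A N n →ₗ[R] TorModule R B N n :=
  (((Tor (ModuleCat R) n).map (ModuleCat.ofHom f)).app (ModuleCat.of R N)).hom

theorem flat_of_projective (P : ModuleCat.{u} R) [Projective P] : Module.Flat R P :=
  have := (IsProjective.iff_projective (R := R) P).2 inferInstance
  inferInstance

theorem exists_torMap_longExact {f : A →ₗ[R] B} {g : B →ₗ[R] C} (hf : Function.Injective f)
    (hg : Function.Surjective g) (hfg : Function.Exact f g) (n : ℕ) :
    ∃ δ : TorModule R C N (n + 1) →ₗ[R] TorModule R A N n,
      Function.Exact (torMap N g (n + 1)) δ ∧ Function.Exact δ (torMap N f n) ∧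
        Function.Exact (torMap N f n) (torMap N g n) := by
  let α := (tensoringLeft (ModuleCat R)).map (ModuleCat.ofHom f)
  let β := (tensoringLeft (ModuleCat R)).map (ModuleCat.ofHom g)
  have w : α ≫ β = 0 := by
    rw [← Functor.map_comp, ← ModuleCat.ofHom_comp, hfg.linearMap_comp_eq_zero,
      ModuleCat.ofHom_zero, Functor.map_zero]
  obtain ⟨δ, hδ⟩ := exists_leftDerived_longExact (α := α) (β := β) w
    (fun P _ => by
      have := flat_of_projective P
      exact ModuleCat.shortComplex_shortExact _ (rTensor_exact P hfg hg)
        (Module.Flat.rTensor_preserves_injective_linearMap f hf)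
        (LinearMap.rTensor_surjective P hg)) (ModuleCat.of R N) n
  exact ⟨δ.hom, (ShortComplex.ShortExact.moduleCat_exact_iff_function_exact _).1 (hδ.exact 1),
    (ShortComplex.ShortExact.moduleCat_exact_iff_function_exact _).1 (hδ.exact 2),
    (ShortComplex.ShortExact.moduleCat_exact_iff_function_exact _).1 (hδ.exact 3)⟩

theorem torMap_lsmul (r : R) (n : ℕ) (z : TorModule R A N n) :
    torMap N (LinearMap.lsmul R A r) n z = r • z := by
  have hr : (tensoringLeft (ModuleCat R)).map (ModuleCat.ofHom (LinearMap.lsmul R A r)) =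
      r • 𝟙 _ := by
    ext X : 2
    ext : 1
    exact TensorProduct.ext' fun _ _ => rfl
  change ((NatTrans.leftDerived ((tensoringLeft (ModuleCat R)).map
    (ModuleCat.ofHom (LinearMap.lsmul R A r))) n).app _).hom z = r • z
  rw [hr, leftDerived_smul_app, NatTrans.leftDerived_id]
  rfl

theorem smul_tor_eq_zero {r : R} (hr : ∀ x : N, r • x = 0) (n : ℕ) (z : TorModule R A N n) :
    r • z = 0 := by
  let T := ((tensoringLeft (ModuleCat R)).obj (ModuleCat.of R A)).leftDerived n
  have hN : r • 𝟙 (ModuleCat.of R N) = (0 : R) • 𝟙 _ := by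
    ext x
    exact (hr x).trans (zero_smul R x).symm
  have h := congrArg T.map hN
  rw [T.map_smul, T.map_smul, T.map_id, zero_smul] at h
  exact congrArg (fun φ => φ.hom z) h

theorem nonempty_torModule_zero_equiv :
    Nonempty (TorModule R A N 0 ≃ₗ[R] A ⊗[R] N) :=
  ⟨((((tensoringLeft (ModuleCat R)).obj (ModuleCat.of R A)).leftDerivedZeroIsoSelf).app
    (ModuleCat.of R N)).toLinearEquiv⟩

variable {N}

theorem subsingleton_torModule_succ_iff (P : ProjectiveResolution (ModuleCat.of R N)) (n : ℕ) :
    Subsingleton (TorModule R A N (n + 1)) ↔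
      Function.Exact ((P.complex.d (n + 2) (n + 1)).hom.lTensor A)
        ((P.complex.d (n + 1) n).hom.lTensor A) := by
  let T := (tensoringLeft (ModuleCat R)).obj (ModuleCat.of R A)
  refine (P.isoLeftDerivedObj T (n + 1)).toLinearEquiv.toEquiv.subsingleton_congr.trans ?_
  rw [← ModuleCat.isZero_iff_subsingleton, HomologicalComplex.homologyFunctor_obj,
    ← HomologicalComplex.exactAt_iff_isZero_homology,
    HomologicalComplex.exactAt_iff' _ (n + 2) (n + 1) n (by simp) (by simp),
    ShortComplex.ShortExact.moduleCat_exact_iff_function_exact]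
  rfl

theorem subsingleton_torModule_succ_of_flat [Module.Flat R A] (n : ℕ) :
    Subsingleton (TorModule R A N (n + 1)) := by
  let P := projectiveResolution (ModuleCat.of R N)
  exact (subsingleton_torModule_succ_iff P n).2 <| Module.Flat.lTensor_exact A <|
    (ShortComplex.ShortExact.moduleCat_exact_iff_function_exact _).1 (P.exact_succ n)

theorem finite_torModule [IsNoetherianRing R] [Module.Finite R A] [Module.Finite R N] (n : ℕ) :
    Module.Finite R (TorModule R A N n) := by
  induction n generalizing A with
  | zero =>
    obtain ⟨e⟩ := nonempty_torModule_zero_equiv (R := R) (A := A) N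
    exact Module.Finite.equiv e.symm
  | succ n ih =>
    obtain ⟨m, g, hg⟩ := Module.Finite.exists_fin' R A
    obtain ⟨δ, hδ, -⟩ := exists_torMap_longExact N (LinearMap.ker g).injective_subtype hg
      (LinearMap.exact_subtype_ker_map g) n
    have := subsingleton_torModule_succ_of_flat (R := R) (A := Fin m → R) (N := N) n
    have := ih (A := LinearMap.ker g)
    refine Module.Finite.of_injective δ ?_
    rw [injective_iff_map_eq_zero]
    intro x hx
    obtain ⟨z, rfl⟩ := (hδ x).1 hx
    rw [Subsingleton.elim z 0, map_zero]

end TorModule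

section Module

open scoped TensorProduct

variable {R M F : Type*} [CommRing R] [AddCommGroup M] [Module R M] [AddCommGroup F] [Module R F]

theorem subsingleton_of_top_le_smul_top [Module.Finite R M] {I : Ideal R}
    (hI : I ≤ Ideal.jacobson ⊥) (h : ⊤ ≤ (I • ⊤ : Submodule R M)) : Subsingleton M :=
  (Submodule.subsingleton_iff R).1 <| subsingleton_of_bot_eq_top <| Eq.symm <|
    Submodule.eq_bot_of_le_smul_of_le_jacobson_bot I _ Module.Finite.fg_top h hI

theorem comap_subtype_smul_top_le {K : Submodule R F} {I : Ideal R}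
    (h : Function.Injective (K.subtype.rTensor (R ⧸ I))) :
    (I • ⊤ : Submodule R F).comap K.subtype ≤ I • ⊤ := by
  rw [← LinearMap.lTensor_inj_iff_rTensor_inj] at h
  intro x hx
  rw [← LinearMap.ker_tensorProductMk] at hx ⊢
  exact h (hx.trans (map_zero _).symm)

theorem smul_top_le_smul_top_of_rTensor_injective {K : Submodule R F} {I J : Ideal R}
    (hJI : J ^ 2 ≤ I) (hK : K ≤ J • ⊤) (h : Function.Injective (K.subtype.rTensor (R ⧸ I))) :
    (J • ⊤ : Submodule R K) ≤ I • ⊤ := by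
  refine Submodule.smul_le.2 fun a ha x _ => comap_subtype_smul_top_le h ?_
  have hax : a • (x : F) ∈ J • J • (⊤ : Submodule R F) := Submodule.smul_mem_smul ha (hK x.2)
  rw [← Submodule.mul_smul, ← pow_two] at hax
  exact Submodule.smul_mono_left hJI hax

section IsLocalRing

variable [IsLocalRing R]

theorem exists_surjective_ker_le_maximalIdeal_smul_top (M : Type*) [AddCommGroup M] [Module R M]
    [Module.Finite R M] :
    ∃ (n : ℕ) (f : (Fin n → R) →ₗ[R] M), Function.Surjective f ∧
      LinearMap.ker f ≤ maximalIdeal R • ⊤ := by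
  let b := Module.finBasis (ResidueField R) (ResidueField R ⊗[R] M)
  let π := TensorProduct.mk R (ResidueField R) M 1
  have hπ : Function.Surjective π :=
    TensorProduct.mk_surjective R M _ Ideal.Quotient.mk_surjective
  choose v hv using fun i => hπ (b i)
  refine ⟨_, Fintype.linearCombination R v, ?_, fun c hc => ?_⟩
  · rw [← LinearMap.range_eq_top, Fintype.range_linearCombination]
    exact span_eq_top_of_tmul_eq_basis v b hv
  · have hcb : ∑ i, residue R (c i) • b i = 0 := by
      calc ∑ i, residue R (c i) • b i = ∑ i, π (c i • v i) :=
            Finset.sum_congr rfl fun i _ => by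
              rw [map_smul, hv]
              exact algebraMap_smul (ResidueField R) (c i) (b i)
        _ = π (Fintype.linearCombination R v c) := by
              rw [Fintype.linearCombination_apply, map_sum]
        _ = 0 := by rw [LinearMap.mem_ker.1 hc, map_zero]
    rw [pi_eq_sum_univ' c]
    exact Submodule.sum_mem _ fun i _ => Submodule.smul_mem_smul
      ((residue_eq_zero_iff _).1 (Fintype.linearIndependent_iff.1 b.linearIndependent _ hcb i))
      trivial

theorem exists_residueField_retraction [Nontrivial M]
    (hM : maximalIdeal R ≤ Module.annihilator R M) :
    ∃ (f : ResidueField R →ₗ[R] M) (g : M →ₗ[R] ResidueField R), g ∘ₗ f = LinearMap.id := by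
  have hT : Module.IsTorsionBySet R M (maximalIdeal R) := fun x a =>
    Module.mem_annihilator.1 (hM a.2) x
  let : Module (ResidueField R) M := hT.module
  have : IsScalarTower R (ResidueField R) M := hT.isScalarTower
  obtain ⟨x, hx⟩ := exists_ne (0 : M)
  obtain ⟨g, hg⟩ := LinearMap.exists_leftInverse_of_injective
    (LinearMap.toSpanSingleton (ResidueField R) M x) (LinearMap.ker_toSpanSingleton _ hx)
  exact ⟨(LinearMap.toSpanSingleton (ResidueField R) M x).restrictScalars R, g.restrictScalars R,
    LinearMap.ext fun r => LinearMap.congr_fun hg r⟩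

end IsLocalRing

end Module

section TorVanish

open scoped TensorProduct Pointwise

theorem exact_comp_iff_injective {R A B C D : Type*} [CommRing R] [AddCommGroup A] [Module R A]
    [AddCommGroup B] [Module R B] [AddCommGroup C] [Module R C] [AddCommGroup D] [Module R D]
    {f : A →ₗ[R] B} {p : B →ₗ[R] C} {ι : C →ₗ[R] D} (hfp : Function.Exact f p)
    (hp : Function.Surjective p) :
    Function.Exact f (ι ∘ₗ p) ↔ Function.Injective ι := by
  refine ⟨fun h => (injective_iff_map_eq_zero ι).2 fun c hc => ?_,
    fun h => (Function.Injective.comp_exact_iff_exact h).2 hfp⟩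
  obtain ⟨b, rfl⟩ := hp c
  exact (hfp b).2 ((h b).1 hc)

variable {R : Type} [CommRing R] {A B C N : Type} [AddCommGroup A] [Module R A]
  [AddCommGroup B] [Module R B] [AddCommGroup C] [Module R C] [AddCommGroup N] [Module R N]
  {i : ℕ}

theorem TorVanish.zero_iff : TorVanish R A N 0 ↔ Subsingleton (A ⊗[R] N) := by
  obtain ⟨e⟩ := nonempty_torModule_zero_equiv (R := R) (A := A) N
  exact e.toEquiv.subsingleton_congr

theorem TorVanish.subsingleton_of_quotient [Module.Finite R A] {I : Ideal R}
    (hI : I ≤ Ideal.jacobson ⊥) (h : TorVanish R A (R ⧸ I) 0) : Subsingleton A := by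
  have := TorVanish.zero_iff.1 h
  have := (TensorProduct.tensorQuotEquivQuotSMul A I).symm.toEquiv.subsingleton
  exact subsingleton_of_top_le_smul_top hI (Submodule.Quotient.subsingleton_iff.1 this).ge

theorem TorVanish.succ_of_flat [Module.Flat R A] (i : ℕ) : TorVanish R A N (i + 1) :=
  subsingleton_torModule_succ_of_flat i

theorem TorVanish.of_subsingleton [Subsingleton A] (i : ℕ) : TorVanish R A N i := by
  cases i with
  | zero => exact TorVanish.zero_iff.2 inferInstance
  | succ i => exact TorVanish.succ_of_flat i

theorem TorVanish.of_retract {f : A →ₗ[R] B} {g : B →ₗ[R] A} (hgf : g ∘ₗ f = LinearMap.id)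
    (hB : TorVanish R B N i) : TorVanish R A N i := by
  have : Subsingleton (TorModule R B N i) := hB
  have h : torMap N g i ∘ₗ torMap N f i = LinearMap.id := by
    rw [← ModuleCat.hom_comp, ← NatTrans.comp_app, ← Functor.map_comp, ← ModuleCat.ofHom_comp, hgf,
      ModuleCat.ofHom_id, CategoryTheory.Functor.map_id]
    rfl
  exact (Function.LeftInverse.injective (g := torMap N g i) (LinearMap.congr_fun h)).subsingleton

theorem TorVanish.congr (e : A ≃ₗ[R] B) : TorVanish R A N i ↔ TorVanish R B N i :=
  ⟨.of_retract e.comp_symm, .of_retract e.symm_comp⟩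

section ShortExact

variable {f : A →ₗ[R] B} {g : B →ₗ[R] C} (hf : Function.Injective f)
  (hg : Function.Surjective g) (hfg : Function.Exact f g)

include hf hg hfg

theorem TorVanish.left_of_shortExact (hC : TorVanish R C N (i + 1)) (hB : TorVanish R B N i) :
    TorVanish R A N i := by
  have : Subsingleton (TorModule R C N (i + 1)) := hC
  have : Subsingleton (TorModule R B N i) := hB
  obtain ⟨δ, -, hδ, -⟩ := exists_torMap_longExact N hf hg hfg i
  refine subsingleton_of_forall_eq 0 fun x => ?_
  obtain ⟨y, rfl⟩ := (hδ x).1 (Subsingleton.elim _ _)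
  rw [Subsingleton.elim y 0, map_zero]

theorem TorVanish.right_of_shortExact (hB : TorVanish R B N (i + 1)) (hA : TorVanish R A N i) :
    TorVanish R C N (i + 1) := by
  have : Subsingleton (TorModule R B N (i + 1)) := hB
  have : Subsingleton (TorModule R A N i) := hA
  obtain ⟨δ, hδ, -⟩ := exists_torMap_longExact N hf hg hfg i
  refine subsingleton_of_forall_eq 0 fun x => ?_
  obtain ⟨y, rfl⟩ := (hδ x).1 (Subsingleton.elim _ _)
  rw [Subsingleton.elim y 0, map_zero]

end ShortExact

theorem TorVanish.ker_iff [Module.Flat R B] {f : B →ₗ[R] C} (hf : Function.Surjective f) :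
    TorVanish R (LinearMap.ker f) N (i + 1) ↔ TorVanish R C N (i + 2) :=
  have hι := (LinearMap.ker f).injective_subtype
  have hιf := LinearMap.exact_subtype_ker_map f
  ⟨.right_of_shortExact hι hf hιf (.succ_of_flat _),
    fun h => .left_of_shortExact hι hf hιf h (.succ_of_flat i)⟩

theorem TorVanish.exists_projective_presentation (N : Type) [AddCommGroup N] [Module R N] :
    ∃ (P : ModuleCat.{0} R) (g : P →ₗ[R] N), Projective P ∧ Function.Surjective g ∧
      ∀ (A : Type) [AddCommGroup A] [Module R A],
        (TorVanish R A N 1 ↔ Function.Injective ((LinearMap.ker g).subtype.lTensor A)) ∧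
        ∀ i, TorVanish R A (LinearMap.ker g) (i + 1) ↔ TorVanish R A N (i + 2) := by
  let P := projectiveResolution (ModuleCat.of R N)
  have hexact {S : ShortComplex (ModuleCat R)} (hS : S.Exact) : Function.Exact S.f.hom S.g.hom :=
    (ShortComplex.ShortExact.moduleCat_exact_iff_function_exact S).1 hS
  let g : P.complex.X 0 →ₗ[R] N := (P.π.f 0).hom
  have hd0 : Function.Exact (P.complex.d 1 0).hom g := hexact P.exact₀
  have hd1 : Function.Exact (P.complex.d 2 1).hom (P.complex.d 1 0).hom := hexact (P.exact_succ 0)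
  let p : P.complex.X 1 →ₗ[R] LinearMap.ker g :=
    (P.complex.d 1 0).hom.codRestrict _ hd0.apply_apply_eq_zero
  have hp : Function.Surjective p := fun ⟨x, hx⟩ =>
    ((hd0 x).1 hx).imp fun _ => Subtype.ext
  have hdp : Function.Exact (P.complex.d 2 1).hom p := fun x =>
    Subtype.ext_iff.trans (hd1 x)
  have : Epi (ModuleCat.ofHom p) := (ModuleCat.epi_iff_surjective _).2 hp
  let Q := truncatedResolution P (ModuleCat.ofHom p)
    (ModuleCat.hom_ext hdp.linearMap_comp_eq_zero)
    ((ShortComplex.ShortExact.moduleCat_exact_iff_function_exact _).2 hdp)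
  have hg : Function.Surjective g := (ModuleCat.epi_iff_surjective (P.π.f 0)).1 inferInstance
  refine ⟨P.complex.X 0, g, P.projective 0, hg, fun A _ _ => ⟨?_, fun i => ?_⟩⟩
  · have hι : (P.complex.d 1 0).hom = (LinearMap.ker g).subtype ∘ₗ p := rfl
    refine (subsingleton_torModule_succ_iff P 0).trans ?_
    rw [hι, LinearMap.lTensor_comp]
    exact exact_comp_iff_injective (lTensor_exact A hdp hp) (LinearMap.lTensor_surjective A hp)
  · exact (subsingleton_torModule_succ_iff Q i).trans
      (subsingleton_torModule_succ_iff P (i + 1)).symm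

theorem TorVanish.rTensor_injective {f : A →ₗ[R] B} {g : B →ₗ[R] C} (hf : Function.Injective f)
    (hg : Function.Surjective g) (hfg : Function.Exact f g) (hC : TorVanish R C N 1) :
    Function.Injective (f.rTensor N) := by
  obtain ⟨P, p, hP, hp, hTor⟩ := TorVanish.exists_projective_presentation (R := R) N
  have := flat_of_projective P
  rw [← LinearMap.lTensor_inj_iff_rTensor_inj]
  exact lTensor_injective_of_exact_of_exact_of_rTensor_injective
    (LinearMap.exact_subtype_ker_map p) hp hfg hg
    ((LinearMap.lTensor_inj_iff_rTensor_inj _ _).1 ((hTor C).1.1 hC))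
    (Module.Flat.lTensor_preserves_injective_linearMap f hf)

theorem TorVanish.symm (h : TorVanish R A N i) : TorVanish R N A i := by
  induction i using Nat.twoStepInduction generalizing A N with
  | zero => exact TorVanish.zero_iff.2 ((TensorProduct.comm R N A).toEquiv.subsingleton_congr.2
      (TorVanish.zero_iff.1 h))
  | one =>
    obtain ⟨P, p, -, hp, hTor⟩ := TorVanish.exists_projective_presentation (R := R) A
    exact (hTor N).1.2 <| (LinearMap.lTensor_inj_iff_rTensor_inj _ _).2 <|
      h.rTensor_injective (LinearMap.ker p).injective_subtype hp (LinearMap.exact_subtype_ker_map p)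
  | more i _ ih =>
    obtain ⟨P, p, hP, hp, hTor⟩ := TorVanish.exists_projective_presentation (R := R) A
    have := flat_of_projective P
    exact ((hTor N).2 i).1 (ih ((TorVanish.ker_iff hp).2 h))

section QuotSMulTop

variable {y : R}

theorem TorVanish.quotSMulTop (hy : IsSMulRegular A y) (hi : TorVanish R A N i)
    (hi' : TorVanish R A N (i + 1)) : TorVanish R (QuotSMulTop y A) N (i + 1) :=
  .right_of_shortExact (f := LinearMap.lsmul R A y) hy (Submodule.mkQ_surjective _)
    (LinearMap.exact_lsmul_mkQ_smul_top A y) hi' hi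

theorem TorVanish.of_quotSMulTop_of_mem_radical (hy : IsSMulRegular A y)
    (hyN : y ∈ (Module.annihilator R N).radical)
    (h : TorVanish R (QuotSMulTop y A) N (i + 1)) : TorVanish R A N i := by
  have : Subsingleton (TorModule R (QuotSMulTop y A) N (i + 1)) := h
  obtain ⟨δ, -, hδ, -⟩ := exists_torMap_longExact N (f := LinearMap.lsmul R A y) hy
    (Submodule.mkQ_surjective _) (LinearMap.exact_lsmul_mkQ_smul_top A y) i
  have hreg : IsSMulRegular (TorModule R A N i) y := by
    refine .of_right_eq_zero_of_smul fun z hz => ?_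
    obtain ⟨w, rfl⟩ := (hδ z).1 ((torMap_lsmul N y i z).trans hz)
    rw [Subsingleton.elim w 0, map_zero]
  obtain ⟨m, hm⟩ := hyN
  refine subsingleton_of_forall_eq 0 fun z => (hreg.pow m).right_eq_zero_of_smul ?_
  exact smul_tor_eq_zero N (Module.mem_annihilator.1 hm) i z

theorem TorVanish.of_quotSMulTop [IsNoetherianRing R] [Module.Finite R A] [Module.Finite R N]
    (hyJ : y ∈ Ideal.jacobson (⊥ : Ideal R)) (hy : IsSMulRegular A y)
    (h : TorVanish R (QuotSMulTop y A) N i) : TorVanish R A N i := by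
  have : Subsingleton (TorModule R (QuotSMulTop y A) N i) := h
  have := finite_torModule (R := R) (A := A) (N := N) i
  obtain ⟨-, -, -, hexact⟩ := exists_torMap_longExact N (f := LinearMap.lsmul R A y) hy
    (Submodule.mkQ_surjective _) (LinearMap.exact_lsmul_mkQ_smul_top A y) i
  refine subsingleton_of_top_le_smul_top (le_refl (Ideal.jacobson (⊥ : Ideal R))) fun z _ => ?_
  obtain ⟨w, rfl⟩ := (hexact z).1 (Subsingleton.elim _ _)
  rw [torMap_lsmul]
  exact Submodule.smul_mem_smul hyJ Submodule.mem_top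

end QuotSMulTop

end TorVanish

section RegularSequence

open RingTheory.Sequence
open scoped TensorProduct Pointwise

variable {R : Type} [CommRing R] {A N : Type} [AddCommGroup A] [Module R A] [AddCommGroup N]
  [Module R N] {xs : List R} {q i : ℕ}

theorem TorVanish.quot_ofList_smul_top (hxs : IsWeaklyRegular A xs)
    (h : ∀ i, q ≤ i → i ≤ q + xs.length → TorVanish R A N i) :
    TorVanish R (A ⧸ (Ideal.ofList xs • ⊤ : Submodule R A)) N (q + xs.length) := by
  induction xs generalizing A q with
  | nil =>
    exact (TorVanish.congr (Submodule.quotEquivOfEqBot _ (by simp))).2 (h q le_rfl le_rfl)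
  | cons x xs ih =>
    rw [List.length_cons] at h ⊢
    obtain ⟨hx, hxs⟩ := (isWeaklyRegular_cons_iff A x xs).1 hxs
    rw [TorVanish.congr (Submodule.quotOfListConsSMulTopEquivQuotSMulTopInner A x xs),
      ← Nat.succ_add_eq_add_succ]
    refine ih hxs fun i hi hi' => ?_
    obtain ⟨i, rfl⟩ := Nat.exists_eq_add_of_lt hi
    exact (h (q + i) (by omega) (by omega)).quotSMulTop hx (h _ (by omega) (by omega))

theorem TorVanish.quot_ofList (hxs : IsWeaklyRegular R xs) (hi : xs.length < i) :
    TorVanish R (R ⧸ Ideal.ofList xs) N i := by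
  obtain ⟨q, rfl⟩ := Nat.exists_eq_add_of_lt hi
  rw [show xs.length + q + 1 = q + 1 + xs.length by omega]
  refine (TorVanish.congr (Submodule.quotEquivOfEq (Ideal.ofList xs • ⊤) _ (by simp))).1 <|
    TorVanish.quot_ofList_smul_top hxs fun i hi _ => ?_
  obtain ⟨i, rfl⟩ := Nat.exists_eq_add_of_lt hi
  exact .succ_of_flat _

theorem TorVanish.of_quot_ofList_smul_top_of_mem_radical (hxs : IsWeaklyRegular A xs)
    (hN : ∀ x ∈ xs, x ∈ (Module.annihilator R N).radical)
    (h : TorVanish R (A ⧸ (Ideal.ofList xs • ⊤ : Submodule R A)) N (i + xs.length)) :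
    TorVanish R A N i := by
  induction xs generalizing A i with
  | nil => exact (TorVanish.congr (Submodule.quotEquivOfEqBot _ (by simp))).1 h
  | cons x xs ih =>
    rw [List.forall_mem_cons] at hN
    obtain ⟨hx, hxs⟩ := (isWeaklyRegular_cons_iff A x xs).1 hxs
    rw [TorVanish.congr (Submodule.quotOfListConsSMulTopEquivQuotSMulTopInner A x xs),
      List.length_cons, ← Nat.succ_add_eq_add_succ] at h
    exact .of_quotSMulTop_of_mem_radical hx hN.1 (ih hxs hN.2 h)

theorem TorVanish.quotient_ofList_of_length_lt {rs ys : List R} (hrs : IsWeaklyRegular R rs)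
    (hys : IsWeaklyRegular A ys) (hrad : ∀ y ∈ ys, y ∈ (Ideal.ofList rs).radical)
    (hi : rs.length < i + ys.length) : TorVanish R A (R ⧸ Ideal.ofList rs) i :=
  .of_quot_ofList_smul_top_of_mem_radical hys (by rwa [Ideal.annihilator_quotient])
    (TorVanish.quot_ofList hrs hi).symm

variable [IsNoetherianRing R] [Module.Finite R A] [Module.Finite R N]

theorem TorVanish.of_quot_ofList_smul_top (hJ : ∀ x ∈ xs, x ∈ Ideal.jacobson (⊥ : Ideal R))
    (hxs : IsWeaklyRegular A xs)
    (h : TorVanish R (A ⧸ (Ideal.ofList xs • ⊤ : Submodule R A)) N i) : TorVanish R A N i := by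
  induction xs generalizing A with
  | nil => exact (TorVanish.congr (Submodule.quotEquivOfEqBot _ (by simp))).1 h
  | cons x xs ih =>
    rw [List.forall_mem_cons] at hJ
    obtain ⟨hx, hxs⟩ := (isWeaklyRegular_cons_iff A x xs).1 hxs
    rw [TorVanish.congr (Submodule.quotOfListConsSMulTopEquivQuotSMulTopInner A x xs)] at h
    exact .of_quotSMulTop hJ.1 hx (ih hJ.2 hxs h)

theorem isWeaklyRegular_tensorProduct_of_torVanish_one
    (hJ : ∀ x ∈ xs, x ∈ Ideal.jacobson (⊥ : Ideal R)) (hxs : IsWeaklyRegular A xs)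
    (h : TorVanish R (A ⧸ (Ideal.ofList xs • ⊤ : Submodule R A)) N 1) :
    IsWeaklyRegular (A ⊗[R] N) xs := by
  induction xs generalizing A with
  | nil => exact .nil R _
  | cons x xs ih =>
    rw [List.forall_mem_cons] at hJ
    obtain ⟨hx, hxs⟩ := (isWeaklyRegular_cons_iff A x xs).1 hxs
    rw [TorVanish.congr (Submodule.quotOfListConsSMulTopEquivQuotSMulTopInner A x xs)] at h
    have hxN : Function.Injective ((LinearMap.lsmul R A x).rTensor N) :=
      (TorVanish.of_quot_ofList_smul_top hJ.2 hxs h).rTensor_injective hx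
        (Submodule.mkQ_surjective _) (LinearMap.exact_lsmul_mkQ_smul_top A x)
    have hlsmul : (LinearMap.lsmul R A x).rTensor N = LinearMap.lsmul R (A ⊗[R] N) x :=
      TensorProduct.ext' fun _ _ => rfl
    rw [hlsmul] at hxN
    exact .cons hxN <| ((QuotSMulTop.quotSMulTopTensorEquivQuotSMulTop x N A).isWeaklyRegular_congr
      xs).1 (ih hJ.2 hxs h)

theorem isWeaklyRegular_of_torVanish_one (hJ : ∀ x ∈ xs, x ∈ Ideal.jacobson (⊥ : Ideal R))
    (hxs : IsWeaklyRegular R xs) (h : TorVanish R N (R ⧸ Ideal.ofList xs) 1) :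
    IsWeaklyRegular N xs :=
  ((TensorProduct.lid R N).isWeaklyRegular_congr xs).1 <|
    isWeaklyRegular_tensorProduct_of_torVanish_one hJ hxs <|
      (TorVanish.congr (Submodule.quotEquivOfEq (Ideal.ofList xs • ⊤) _ (by simp))).2 h.symm

end RegularSequence

section IsLocalRing

open RingTheory.Sequence
open scoped TensorProduct

variable {R : Type} [CommRing R] [IsNoetherianRing R] [IsLocalRing R] {M N : Type}
  [AddCommGroup M] [Module R M] [Module.Finite R M] [AddCommGroup N] [Module R N] {rs : List R}

theorem free_of_torVanish_residueField_one (h : TorVanish R M (ResidueField R) 1) :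
    Module.Free R M := by
  obtain ⟨n, f, hf⟩ := Module.Finite.exists_fin' R M
  have hι := LinearMap.exact_subtype_ker_map f
  refine Module.free_of_lTensor_residueField_injective (LinearMap.ker f).subtype f hf hι ?_
  rw [LinearMap.lTensor_inj_iff_rTensor_inj]
  exact h.rTensor_injective (LinearMap.ker f).injective_subtype hf hι

theorem TorVanish.of_residueField {p i : ℕ} (h : TorVanish R M (ResidueField R) (p + 1))
    (hi : p < i) : TorVanish R M N i := by
  induction p generalizing M i with
  | zero =>
    have := free_of_torVanish_residueField_one h
    obtain ⟨i, rfl⟩ := Nat.exists_eq_add_of_lt hi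
    exact .succ_of_flat _
  | succ p ih =>
    obtain ⟨n, f, hf⟩ := Module.Finite.exists_fin' R M
    obtain ⟨i, rfl⟩ := Nat.exists_eq_add_of_lt hi
    have hker : TorVanish R (LinearMap.ker f) N (p + i + 1) :=
      ih ((TorVanish.ker_iff hf).2 h) (by omega)
    rw [Nat.add_right_comm p 1 i]
    exact (TorVanish.ker_iff hf).1 hker

theorem free_or_torVanish_residueField (hm : ∀ x ∈ rs, x ∈ maximalIdeal R)
    (hrs : IsWeaklyRegular R rs) (hsq : maximalIdeal R ^ 2 ≤ Ideal.ofList rs)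
    (hM : ∀ j, TorVanish R M (R ⧸ Ideal.ofList rs) (j + 1)) {n : ℕ}
    (h : ∀ i, n + 1 < i → i ≤ n + 2 + rs.length → TorVanish R M N i) :
    Module.Free R M ∨ TorVanish R (ResidueField R) N (n + 1 + rs.length) := by
  set I := Ideal.ofList rs
  have hI : I ≤ Ideal.jacobson ⊥ :=
    (Ideal.span_le.2 hm).trans (IsLocalRing.maximalIdeal_le_jacobson _)
  obtain ⟨b, f, hf, hK⟩ := exists_surjective_ker_le_maximalIdeal_smul_top (R := R) M
  let K := LinearMap.ker f
  have hmK : (maximalIdeal R • ⊤ : Submodule R K) ≤ I • ⊤ :=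
    smul_top_le_smul_top_of_rTensor_injective hsq hK <|
      (hM 0).rTensor_injective K.injective_subtype hf (LinearMap.exact_subtype_ker_map f)
  have hKrs : IsWeaklyRegular K rs :=
    isWeaklyRegular_of_torVanish_one (fun x hx => maximalIdeal_le_jacobson _ (hm x hx)) hrs
      ((TorVanish.ker_iff hf).2 (hM 1))
  have hKI : TorVanish R (K ⧸ (I • ⊤ : Submodule R K)) N (n + 1 + rs.length) :=
    TorVanish.quot_ofList_smul_top hKrs fun i hi hi' => by
      obtain ⟨i, rfl⟩ := Nat.exists_eq_add_of_lt hi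
      exact (TorVanish.ker_iff hf).2 (h _ (by omega) (by omega))
  rcases subsingleton_or_nontrivial (K ⧸ (I • ⊤ : Submodule R K)) with h0 | h0
  · have := subsingleton_of_top_le_smul_top hI (Submodule.Quotient.subsingleton_iff.1 h0).ge
    have hfinj := LinearMap.ker_eq_bot.1 ((Submodule.subsingleton_iff_eq_bot).1 this)
    exact .inl (Module.Free.of_equiv (LinearEquiv.ofBijective f ⟨hfinj, hf⟩))
  · have hann : maximalIdeal R ≤ Module.annihilator R (K ⧸ (I • ⊤ : Submodule R K)) := by
      rw [Submodule.annihilator_quotient]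
      exact fun a ha => Submodule.mem_colon.2 fun x hx => hmK (Submodule.smul_mem_smul ha hx)
    obtain ⟨u, v, huv⟩ := exists_residueField_retraction hann
    exact .inr (hKI.of_retract huv)

theorem TorVanish.of_window_of_quotient_ofList (hm : ∀ x ∈ rs, x ∈ maximalIdeal R)
    (hrs : IsWeaklyRegular R rs) (hsq : maximalIdeal R ^ 2 ≤ Ideal.ofList rs)
    [Module.Finite R N] {n s i : ℕ}
    (hM : ∀ j, s < j → TorVanish R M (R ⧸ Ideal.ofList rs) j)
    (h : ∀ i, n + 1 + s < i → i ≤ n + 2 + s + rs.length → TorVanish R M N i)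
    (hi : n + s + rs.length < i) : TorVanish R M N i := by
  induction s generalizing M i with
  | zero =>
    rcases free_or_torVanish_residueField hm hrs hsq (fun j => hM _ j.succ_pos) h with _ | hk
    · obtain ⟨i, rfl⟩ := Nat.exists_eq_add_of_lt hi
      exact .succ_of_flat _
    · rw [Nat.add_right_comm] at hk
      exact (hk.symm.of_residueField hi).symm
  | succ s ih =>
    obtain ⟨b, f, hf⟩ := Module.Finite.exists_fin' R M
    have hker (X : Type) [AddCommGroup X] [Module R X] {j : ℕ} (hj : 0 < j) :
        TorVanish R (LinearMap.ker f) X j ↔ TorVanish R M X (j + 1) := by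
      obtain ⟨j, rfl⟩ := Nat.exists_eq_succ_of_ne_zero hj.ne'
      exact TorVanish.ker_iff hf
    obtain ⟨i, rfl⟩ := Nat.exists_eq_add_of_lt hi
    exact (hker N (by omega)).1 (ih (fun j hj => (hker _ (by omega)).2 (hM _ (by omega)))
      (fun j hj hj' => (hker N (by omega)).2 (h _ (by omega) (by omega))) (by omega))

/-- `M` is `m`-Tor-rigid: if `m` consecutive `Tor_i^R(M, N)` vanish, starting in some degree
`n ≥ 1`, then all `Tor_i^R(M, N)` with `i ≥ n` vanish. As usual, `N` is finitely generated. -/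
def IsTorRigid (R : Type) [CommRing R] (m : ℕ) (M : Type) [AddCommGroup M] [Module R M] : Prop :=
  ∀ (N : Type) [AddCommGroup N] [Module R N] [Module.Finite R N] (n : ℕ), 1 ≤ n →
    (∀ i, n ≤ i → i < n + m → TorVanish R M N i) → ∀ i, n ≤ i → TorVanish R M N i

theorem isTorRigid_of_isWeaklyRegular (hm : ∀ x ∈ rs, x ∈ maximalIdeal R)
    (hrs : IsWeaklyRegular R rs) (hsq : maximalIdeal R ^ 2 ≤ Ideal.ofList rs) {ys : List R}
    (hym : ∀ y ∈ ys, y ∈ maximalIdeal R) (hys : IsWeaklyRegular M ys) :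
    IsTorRigid R (2 * rs.length - ys.length + 2) M := by
  intro N _ _ _ n hn h i hi
  have hM {j : ℕ} : rs.length < j + ys.length → TorVanish R M (R ⧸ Ideal.ofList rs) j :=
    .quotient_ofList_of_length_lt hrs hys fun y hy => ⟨2, hsq (Ideal.pow_mem_pow (hym y hy) 2)⟩
  rcases lt_or_ge rs.length ys.length with hlt | hle
  · have := TorVanish.subsingleton_of_quotient
      ((Ideal.span_le.2 hm).trans (maximalIdeal_le_jacobson _)) (hM (j := 0) (by omega))
    exact .of_subsingleton i
  · rcases lt_or_ge i (n + (2 * rs.length - ys.length + 2)) with hi' | hi'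
    · exact h i hi hi'
    · exact .of_window_of_quotient_ofList hm hrs hsq (n := n - 1) (s := rs.length - ys.length)
        (fun j hj => hM (by omega)) (fun j hj hj' => h j (by omega) (by omega)) (by omega)

end IsLocalRing

section MinimalMultiplicity

open RingTheory.Sequence

theorem exists_isWeaklyRegular_length_eq_depth {R M : Type} [CommRing R] [IsLocalRing R]
    [AddCommGroup M] [Module R M] {t : ℕ} (ht : depth R M = t) :
    ∃ ys : List R, ys.length = t ∧ (∀ y ∈ ys, y ∈ maximalIdeal R) ∧ IsWeaklyRegular M ys := by
  let S := {n : ℕ∞ | ∃ rs : List R, (∀ x ∈ rs, x ∈ maximalIdeal R) ∧ IsRegular M rs ∧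
    (rs.length : ℕ∞) = n}
  rcases S.eq_empty_or_nonempty with hS | hS
  · have : t = 0 := by
      change sSup S = t at ht
      rw [hS, sSup_empty, bot_eq_zero] at ht
      exact_mod_cast ht.symm
    exact ⟨[], this.symm, by simp⟩
  · have := hS.to_subtype
    have hlt : sSup S < ⊤ := ht.trans_lt (ENat.natCast_lt_top t)
    obtain ⟨ys, hym, hys, hlen⟩ := ENat.sSup_mem_of_nonempty_of_lt_top hlt
    exact ⟨ys, by exact_mod_cast hlen.trans ht, hym, hys.toIsWeaklyRegular⟩

namespace HasMinimalMultiplicity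

variable {R : Type} [CommRing R] [IsNoetherianRing R] [IsLocalRing R] {d : ℕ}
  (hR : HasMinimalMultiplicity R d) (M : Type) [AddCommGroup M] [Module R M] [Module.Finite R M]

include hR

theorem isTorRigid_of_isWeaklyRegular {ys : List R} (hym : ∀ y ∈ ys, y ∈ maximalIdeal R)
    (hys : IsWeaklyRegular M ys) : IsTorRigid R (2 * d - ys.length + 2) M := by
  obtain ⟨rs, rfl, hm, hrs, hsq⟩ := hR
  exact _root_.isTorRigid_of_isWeaklyRegular hm hrs (hsq.trans_le Ideal.mul_le_left) hym hys

theorem isTorRigid_of_depth_eq {t : ℕ} (ht : depth R M = t) :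
    IsTorRigid R (2 * d - t + 2) M := by
  obtain ⟨ys, rfl, hym, hys⟩ := exists_isWeaklyRegular_length_eq_depth ht
  exact hR.isTorRigid_of_isWeaklyRegular M hym hys

theorem isTorRigid : IsTorRigid R (2 * d + 2) M :=
  hR.isTorRigid_of_isWeaklyRegular M (List.forall_mem_nil _) (.nil R M)

end HasMinimalMultiplicity

end MinimalMultiplicity

theorem statement14 (R : Type) [CommRing R] [IsNoetherianRing R] [IsLocalRing R]
    (d : ℕ) (hdim : ringKrullDim R = (d : WithBot ℕ∞)) (hCM : depth R R = (d : ℕ∞))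
    (hmin : HasMinimalMultiplicity R d)
    (M : Type) [AddCommGroup M] [Module R M] [Module.Finite R M]
    (t : ℕ) (ht : depth R M = (t : ℕ∞)) :
    (∀ (N : ModuleCat R), Module.Finite R N → ∀ n : ℕ, 1 ≤ n →
      (∀ i : ℕ, n ≤ i → i ≤ n + (2 * d - t + 1) → TorVanish R M N i) →
      ∀ i : ℕ, n ≤ i → TorVanish R M N i) ∧
    (∀ (M' : ModuleCat R), Module.Finite R M' → depth R M' = (d : ℕ∞) →
      ∀ (N : ModuleCat R), Module.Finite R N → ∀ n : ℕ, 1 ≤ n →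
      (∀ i : ℕ, n ≤ i → i ≤ n + (d + 1) → TorVanish R M' N i) →
      ∀ i : ℕ, n ≤ i → TorVanish R M' N i) ∧
    (∀ (M' : ModuleCat R), Module.Finite R M' →
      ∀ (N : ModuleCat R), Module.Finite R N → ∀ n : ℕ, 1 ≤ n →
      (∀ i : ℕ, n ≤ i → i ≤ n + (2 * d + 1) → TorVanish R M' N i) →
      ∀ i : ℕ, n ≤ i → TorVanish R M' N i) := by
  refine ⟨fun N hN n hn h => ?_, fun M' hM' hd N hN n hn h => ?_, fun M' hM' N hN n hn h => ?_⟩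
  · exact hmin.isTorRigid_of_depth_eq M ht N n hn fun i hi hi' => h i hi (by omega)
  · exact hmin.isTorRigid_of_depth_eq M' hd N n hn fun i hi hi' => h i hi (by omega)
  · exact hmin.isTorRigid M' N n hn fun i hi hi' => h i hi (by omega)
end
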